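/- arXiv:2508.19211 — 5 statements merged into one kernel-verified Lean document; each statement's English description precedes it below -/
import Mathlib

section
/- Let ℓ be a prime with ℓ odd or ζ_4 ∈ K, and ℓ ≠ char(K). Let t ≥ 1 be the largest integer such that ζ_{ℓ^t} ∈ K(ζ_{2𝒫}) (or t = ∞ if no largest such integer exists). If ζ_ℓ ∉ K, then K(ζ_{2𝒫}) ∩ √[ℓ^∞]{K^×} = ⟨ζ_{ℓ^t}, K^×⟩ (as subgroups of K̄^×) and K(ζ_{2𝒫}) ∩ K(√[ℓ^∞]{K^×}) = K(ζ_{ℓ^t}) (as subfields of K̄). -/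
noncomputable section

open IntermediateField

/-- `K^×` viewed as a subgroup of the units of the algebraic closure of `K`. -/
def baseUnits (K : Type*) [Field K] : Subgroup (AlgebraicClosure K)ˣ :=
  (Units.map (algebraMap K (AlgebraicClosure K)).toMonoidHom).range

/-- The subgroup of `(AlgebraicClosure K)ˣ` of elements whose `m`-th power lies in `K^×`. -/
def radGroup (K : Type*) [Field K] (m : ℕ) : Subgroup (AlgebraicClosure K)ˣ where
  carrier := {x | ∃ y : K, algebraMap K (AlgebraicClosure K) y = (x : AlgebraicClosure K) ^ m}
  one_mem' := ⟨1, by simp⟩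
  mul_mem' := by
    rintro a b ⟨y, hy⟩ ⟨z, hz⟩
    exact ⟨y * z, by rw [map_mul, hy, hz, Units.val_mul, mul_pow]⟩
  inv_mem' := by
    rintro a ⟨y, hy⟩
    refine ⟨y⁻¹, ?_⟩
    rw [map_inv₀, hy, Units.val_inv_eq_inv_val, inv_pow]

lemma radGroup_le (K : Type*) [Field K] {m k : ℕ} :
    radGroup K m ≤ radGroup K (m * k) := by
  rintro x ⟨y, hy⟩
  exact ⟨y ^ k, by rw [map_pow, hy, ← pow_mul]⟩

/-- The group `√[ℓ^∞]{K^×}` of radicals of `ℓ`-power order over `K`. -/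
def radInf (K : Type*) [Field K] (ℓ : ℕ) : Subgroup (AlgebraicClosure K)ˣ where
  carrier := {x | ∃ n : ℕ, x ∈ radGroup K (ℓ ^ n)}
  one_mem' := ⟨0, one_mem _⟩
  mul_mem' := by
    rintro a b ⟨n, ha⟩ ⟨m, hb⟩
    refine ⟨n + m, mul_mem ?_ ?_⟩
    · have h : radGroup K (ℓ ^ n) ≤ radGroup K (ℓ ^ (n + m)) := by
        rw [pow_add]; exact radGroup_le K
      exact h ha
    · have h : radGroup K (ℓ ^ m) ≤ radGroup K (ℓ ^ (n + m)) := by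
        rw [add_comm, pow_add]; exact radGroup_le K
      exact h hb
  inv_mem' := by
    rintro a ⟨n, ha⟩
    exact ⟨n, inv_mem ha⟩

/-- The units of the algebraic closure lying in an intermediate field `F`, as a subgroup. -/
def unitsIn {K : Type*} [Field K] (F : IntermediateField K (AlgebraicClosure K)) :
    Subgroup (AlgebraicClosure K)ˣ where
  carrier := {x | (x : AlgebraicClosure K) ∈ F}
  one_mem' := by
    show ((1 : (AlgebraicClosure K)ˣ) : AlgebraicClosure K) ∈ F
    simpa using one_mem F
  mul_mem' := by
    intro a b ha hb
    show ((a * b : (AlgebraicClosure K)ˣ) : AlgebraicClosure K) ∈ F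
    rw [Units.val_mul]
    exact mul_mem ha hb
  inv_mem' := by
    intro x hx
    show ((x⁻¹ : (AlgebraicClosure K)ˣ) : AlgebraicClosure K) ∈ F
    rw [Units.val_inv_eq_inv_val]
    exact inv_mem hx

/-- `K(ζ_{2𝒫})`: the extension of `K` generated by all roots of unity whose order is `4` or
an odd prime, and not divisible by the characteristic of `K`. -/
def cyclo2P (K : Type*) [Field K] : IntermediateField K (AlgebraicClosure K) :=
  IntermediateField.adjoin K
    {x : AlgebraicClosure K |
      ∃ n : ℕ, (n = 4 ∨ (n.Prime ∧ Odd n)) ∧ ¬ (ringChar K ∣ n) ∧ IsPrimitiveRoot x n}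

/-- The set of roots of unity of order exactly `n` in the algebraic closure of `K`. -/
def primRoots (K : Type*) [Field K] (n : ℕ) : Set (AlgebraicClosure K) :=
  {x | IsPrimitiveRoot x n}

/-- The set of roots of unity of order `ℓ^n` for `n ≤ t` (all of them if `t = ∞`). -/
def pPowRoots (K : Type*) [Field K] (ℓ : ℕ) (t : ℕ∞) : Set (AlgebraicClosure K) :=
  {x | ∃ n : ℕ, (n : ℕ∞) ≤ t ∧ IsPrimitiveRoot x (ℓ ^ n)}

/-- The set of units that are roots of unity of order `ℓ^n` for `n ≤ t`. -/
def pPowRootsUnits (K : Type*) [Field K] (ℓ : ℕ) (t : ℕ∞) : Set (AlgebraicClosure K)ˣ :=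
  {x | ∃ n : ℕ, (n : ℕ∞) ≤ t ∧ IsPrimitiveRoot (x : AlgebraicClosure K) (ℓ ^ n)}

/-!
The argument works for any abelian extension `L` of `K` in place of `K(ζ_{2𝒫})`. As `ζ_ℓ ∉ K`, some
`τ ∈ Gal(K̄/K)` moves `ζ_ℓ`, so it acts on the `ℓ^n`-th roots of unity by `w ↦ w ^ u` with `u - 1`
prime to `ℓ`.

Let `x ∈ L` with `x ^ ℓ^n ∈ K^×`. Because `τ` commutes with every `σ` on `L`, the cocycle
`σ ↦ σ x / x` is killed by `u - 1` up to a coboundary (Sah's argument), hence is itself the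
coboundary of a root of unity `η ∈ L` of `ℓ`-power order, and `x / η ∈ K^×`.

For the fields, let `g` fix the `ℓ^n`-th roots of unity. Then `τ g τ⁻¹` is `g ^ u` on
`K(√[ℓ^n]{K^×})` and `g` on `L`, and `g ^ ℓ^n` is trivial on `K(√[ℓ^n]{K^×})`; hence `g` fixes
`L ∩ K(√[ℓ^n]{K^×})`. If `g` fixes only `ζ_{ℓ^t}`, correct it by an element of `Gal(K̄/L)` with the
same action on the `ℓ^n`-th roots of unity. One exists because an element of `Gal(K̄/L)` moving
`ζ_{ℓ^(t+1)}` acts on them through an integer congruent to `1` modulo `ℓ^t` but not modulo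
`ℓ^(t+1)`, and, `ℓ` being odd, the powers of such an integer exhaust the residue classes modulo
`ℓ^n` that are `1` modulo `ℓ^t`.
-/

section PrimePowerResidues

lemma mem_powers_of_pow_orderOf_eq_one {G : Type*} [CommGroup G] [IsCyclic G] [Finite G] {x y : G}
    (hy : y ^ orderOf x = 1) : y ∈ Submonoid.powers x := by
  have zpowers_le_ker : Subgroup.zpowers x ≤ (powMonoidHom (orderOf x) : G →* G).ker :=
    Subgroup.zpowers_le.2 (pow_orderOf_eq_one x)
  have card_ker : Nat.card (powMonoidHom (orderOf x) : G →* G).ker = orderOf x := by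
    rw [IsCyclic.card_powMonoidHom_ker, Nat.gcd_eq_right (orderOf_dvd_natCard x)]
  have zpowers_eq_ker := Subgroup.eq_of_le_of_card_ge zpowers_le_ker
    (by rw [card_ker, Nat.card_zpowers])
  rw [mem_powers_iff_mem_zpowers, zpowers_eq_ker]
  exact hy

lemma add_two_le_prime_mul {p t : ℕ} (hp : p.Prime) (hp2 : p ≠ 2) (ht : t ≠ 0) :
    t + 2 ≤ p * t := by
  have : 3 ≤ p := lt_of_le_of_ne hp.two_le hp2.symm
  nlinarith [Nat.pos_of_ne_zero ht]

lemma one_add_prime_pow_mul_pow_prime_pow {p t : ℕ} (hp : p.Prime) (hp2 : p ≠ 2) (ht : t ≠ 0)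
    (b : ℤ) (n : ℕ) : (1 + p ^ t * b : ZMod (p ^ (n + t))) ^ p ^ n = 1 := by
  obtain ⟨y, hy⟩ := ZMod.exists_one_add_mul_pow_prime_pow_eq (R := ZMod (p ^ (n + t)))
    (u := p ^ t) (v := p) hp (dvd_pow_self _ ht)
    (by
      rw [← pow_succ', ← pow_succ, ← pow_mul, mul_comm]
      exact pow_dvd_pow _ (add_two_le_prime_mul hp hp2 ht)) b n
  rw [hy, ← pow_add, ← Nat.cast_pow, ZMod.natCast_self, zero_mul, add_zero]

lemma exists_pow_modEq_prime_pow {p t : ℕ} (hp : p.Prime) (hp2 : p ≠ 2) (ht : t ≠ 0) {u v : ℤ}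
    (hu : u ≡ 1 [ZMOD (p ^ t : ℕ)]) (hu' : ¬ u ≡ 1 [ZMOD (p ^ (t + 1) : ℕ)])
    (hv : v ≡ 1 [ZMOD (p ^ t : ℕ)]) (n : ℕ) :
    ∃ k : ℕ, u ^ k ≡ v [ZMOD (p ^ (n + t) : ℕ)] := by
  obtain ⟨a, ha⟩ := hu.symm.dvd
  obtain ⟨b, hb⟩ := hv.symm.dvd
  obtain rfl : u = 1 + p ^ t * a := by push_cast at ha; linear_combination ha
  obtain rfl : v = 1 + p ^ t * b := by push_cast at hb; linear_combination hb
  have ha' : ¬ (p : ℤ) ∣ a := by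
    rintro ⟨c, rfl⟩
    refine hu' (Int.modEq_iff_dvd.2 ⟨-c, ?_⟩)
    push_cast
    ring
  have orderOf_u := ZMod.orderOf_one_add_mul_prime_pow hp t ht (add_two_le_prime_mul hp hp2 ht)
    a ha' n
  have pow_v := one_add_prime_pow_mul_pow_prime_pow hp hp2 ht b n
  have : NeZero (p ^ (n + t)) := ⟨pow_ne_zero _ hp.ne_zero⟩
  have := ZMod.isCyclic_units_of_prime_pow p hp hp2 (n + t)
  have unit_u := IsUnit.of_pow_eq_one (orderOf_u ▸ pow_orderOf_eq_one _)
    (pow_ne_zero n hp.ne_zero)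
  have unit_v := IsUnit.of_pow_eq_one pow_v (pow_ne_zero n hp.ne_zero)
  obtain ⟨k, hk⟩ : unit_v.unit ∈ Submonoid.powers unit_u.unit := by
    apply mem_powers_of_pow_orderOf_eq_one
    rw [← orderOf_units, IsUnit.unit_spec, orderOf_u, Units.ext_iff]
    exact pow_v
  refine ⟨k, (ZMod.intCast_eq_intCast_iff _ _ _).1 ?_⟩
  push_cast
  exact congrArg Units.val hk

end PrimePowerResidues

section Fields

variable {K Ω : Type*} [Field K] [Field Ω] [Algebra K Ω]

lemma isSeparable_of_isPrimitiveRoot {n : ℕ} [NeZero n] {ζ : Ω} (hζ : IsPrimitiveRoot ζ n) :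
    IsSeparable K ζ := by
  have hn : (n : K) ≠ 0 := fun h ↦ hζ.neZero'.out (by simpa using congrArg (algebraMap K Ω) h)
  refine (Polynomial.separable_X_pow_sub_C 1 hn one_ne_zero).of_dvd (minpoly.dvd _ _ ?_)
  simp [hζ.pow_eq_one]

lemma exists_mem_fixingSubgroup_apply_ne [Normal K Ω] (F : IntermediateField K Ω) {z : Ω}
    (hz : IsSeparable K z) (hzF : z ∉ F) : ∃ σ ∈ F.fixingSubgroup, σ z ≠ z := by
  have hz_bot : z ∉ (⊥ : Subalgebra F Ω) := by
    rintro ⟨y, rfl⟩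
    exact hzF y.2
  obtain ⟨y, hzy, hconj⟩ := (notMem_iff_exists_ne_and_isConjRoot (hz.tower_top F)
    (Normal.splits inferInstance z)).1 hz_bot
  obtain ⟨σ, rfl⟩ := hconj.symm.exists_algEquiv
  exact ⟨σ.restrictScalars K, (F.mem_fixingSubgroup_iff _).2 fun x hx ↦ σ.commutes ⟨x, hx⟩,
    hzy.symm⟩

lemma apply_eq_apply_of_mem_adjoin {S : Set Ω} {σ τ : Gal(Ω/K)} (h : ∀ x ∈ S, σ x = τ x) {z : Ω}
    (hz : z ∈ adjoin K S) : σ z = τ z := by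
  have fixes_S : ∀ x ∈ S, (τ⁻¹ * σ) • x = x := fun x hx ↦ by
    rw [mul_smul, AlgEquiv.smul_def σ, h x hx, ← AlgEquiv.smul_def, inv_smul_smul]
  have fixes_z := (forall_mem_adjoin_smul_eq_self_iff K (τ⁻¹ * σ)).2 fixes_S z hz
  rwa [mul_smul, inv_smul_eq_iff] at fixes_z

lemma apply_apply_comm_of_mem (L : IntermediateField K Ω) [IsAbelianGalois K L] (σ τ : Gal(Ω/K))
    {z : Ω} (hz : z ∈ L) : σ (τ z) = τ (σ z) := by
  have restrict_comm := congrArg Subtype.val <|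
    DFunLike.congr_fun (mul_comm' (σ.restrictNormal L) (τ.restrictNormal L)) ⟨z, hz⟩
  simpa only [AlgEquiv.mul_apply, AlgEquiv.restrictNormal_apply] using restrict_comm

lemma adjoin_isPrimitiveRoot_eq_adjoin_pow_eq_one {S : Set ℕ} (hS0 : 0 ∉ S)
    (hS : ∀ n ∈ S, ∃ ζ : Ω, IsPrimitiveRoot ζ n) :
    adjoin K {x : Ω | ∃ n ∈ S, IsPrimitiveRoot x n} =
      adjoin K {x : Ω | ∃ n ∈ S, n ≠ 0 ∧ x ^ n = 1} := by
  refine le_antisymm (adjoin.mono _ _ _ ?_) (adjoin_le_iff.2 ?_)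
  · rintro x ⟨n, hn, hx⟩
    exact ⟨n, hn, ne_of_mem_of_not_mem hn hS0, hx.pow_eq_one⟩
  · rintro x ⟨n, hn, hn0, hx⟩
    obtain ⟨ζ, hζ⟩ := hS n hn
    have : NeZero n := ⟨hn0⟩
    obtain ⟨i, -, rfl⟩ := hζ.eq_pow_of_pow_eq_one hx
    have ζ_mem : ζ ∈ adjoin K {x : Ω | ∃ n ∈ S, IsPrimitiveRoot x n} :=
      subset_adjoin _ _ ⟨n, hn, hζ⟩
    exact pow_mem ζ_mem i

/-- The integer `u` represents the value at `σ` of the mod `q` cyclotomic character: `σ` raises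
every `q`-th root of unity to the power `u`. The field `Ω` need not contain primitive `q`-th roots
of unity, so `u` need not be unique modulo `q`. -/
def IsCyclotomicExponent (q : ℕ) (σ : Gal(Ω/K)) (u : ℤ) : Prop :=
  ∀ ⦃w : Ω⦄, w ^ q = 1 → σ w = w ^ u

lemma exists_isCyclotomicExponent (q : ℕ) [NeZero q] (σ : Gal(Ω/K)) :
    ∃ u, IsCyclotomicExponent q σ u := by
  obtain ⟨u, hu⟩ := rootsOfUnity.integer_power_of_ringEquiv' q σ.toRingEquiv
  refine ⟨u, fun w hw ↦ ?_⟩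
  have hw' := hu (Units.ofPowEqOne w q hw (NeZero.ne q)) ((mem_rootsOfUnity' _ _).2 hw)
  simpa using hw'

namespace IsCyclotomicExponent

variable {q : ℕ} {σ : Gal(Ω/K)} {u : ℤ}

lemma pow (hσ : IsCyclotomicExponent q σ u) (k : ℕ) :
    IsCyclotomicExponent q (σ ^ k) (u ^ k) := by
  intro w hw
  induction k with
  | zero => simp
  | succ k ih =>
    rw [pow_succ', AlgEquiv.mul_apply, ih, map_zpow₀, hσ hw, ← zpow_mul, pow_succ']

lemma restrictNormal (hσ : IsCyclotomicExponent q σ u) (L : IntermediateField K Ω) [Normal K L] :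
    IsCyclotomicExponent q (σ.restrictNormal L) u := fun w hw ↦ by
  apply (algebraMap L Ω).injective
  rw [AlgEquiv.restrictNormal_commutes, map_zpow₀]
  exact hσ (by rw [← map_pow, hw, map_one])

lemma apply_eq_self_iff (hσ : IsCyclotomicExponent q σ u) {m : ℕ} (hm : m ∣ q) {ζ : Ω}
    (hζ : IsPrimitiveRoot ζ m) (hm0 : m ≠ 0) : σ ζ = ζ ↔ u ≡ 1 [ZMOD m] := by
  have hζ0 := hζ.ne_zero hm0
  rw [hσ ((hζ.pow_eq_one_iff_dvd q).2 hm), Int.modEq_comm, Int.modEq_iff_dvd,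
    ← hζ.zpow_eq_one_iff_dvd, zpow_sub_one₀ hζ0, mul_inv_eq_one₀ hζ0]

lemma apply_eq_apply_of_modEq (hσ : IsCyclotomicExponent q σ u) {τ : Gal(Ω/K)} {v : ℤ}
    (hτ : IsCyclotomicExponent q τ v) (huv : u ≡ v [ZMOD q]) {w : Ω} (hw : w ^ q = 1) :
    σ w = τ w := by
  obtain ⟨c, hc⟩ := huv.dvd
  obtain rfl | hw0 := eq_or_ne w 0
  · rw [map_zero, map_zero]
  obtain rfl : v = u + q * c := by linear_combination hc
  rw [hσ hw, hτ hw, zpow_add₀ hw0, zpow_mul, zpow_natCast, hw, one_zpow, mul_one]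

end IsCyclotomicExponent

lemma exists_isCyclotomicExponent_isCoprime_sub_one [Normal K Ω] {ℓ : ℕ} (hℓ : ℓ.Prime) {ζ : Ω}
    (hζ : IsPrimitiveRoot ζ ℓ) (hζK : ζ ∉ (⊥ : IntermediateField K Ω)) (n : ℕ) :
    ∃ (τ : Gal(Ω/K)) (u : ℤ), IsCyclotomicExponent (ℓ ^ n) τ u ∧
      IsCoprime (u - 1) ((ℓ ^ n : ℕ) : ℤ) := by
  have : NeZero ℓ := ⟨hℓ.ne_zero⟩
  obtain ⟨τ, -, hτ⟩ := exists_mem_fixingSubgroup_apply_ne ⊥ (isSeparable_of_isPrimitiveRoot hζ) hζK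
  obtain ⟨u, hu⟩ := exists_isCyclotomicExponent (ℓ ^ (n + 1)) τ
  have not_modEq : ¬ u ≡ 1 [ZMOD ℓ] :=
    (hu.apply_eq_self_iff (dvd_pow_self ℓ n.succ_ne_zero) hζ hℓ.ne_zero).not.1 hτ
  refine ⟨τ, u, fun w hw ↦ hu (by rw [pow_succ, pow_mul, hw, one_pow]), ?_⟩
  rw [Nat.cast_pow]
  refine IsCoprime.pow_right (IsCoprime.symm ?_)
  rwa [Prime.coprime_iff_not_dvd (Nat.prime_iff_prime_int.1 hℓ), ← Int.modEq_iff_dvd,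
    Int.modEq_comm]

lemma exists_apply_eq_mul_of_pow_mem_range {q : ℕ} {x : Ω}
    (hx : x ^ q ∈ Set.range (algebraMap K Ω)) (σ : Gal(Ω/K)) :
    ∃ α : Ω, α ^ q = 1 ∧ σ x = α * x := by
  obtain rfl | hx0 := eq_or_ne x 0
  · exact ⟨1, one_pow q, by simp⟩
  obtain ⟨y, hy⟩ := hx
  refine ⟨σ x / x, ?_, (div_mul_cancel₀ _ hx0).symm⟩
  rw [div_pow, ← map_pow, ← hy, σ.commutes, hy, div_self (pow_ne_zero q hx0)]

theorem exists_eq_mul_algebraMap_of_pow_mem_range [IsAbelianGalois K Ω] {q : ℕ} [NeZero q]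
    {τ : Gal(Ω/K)} {u : ℤ} (hτ : IsCyclotomicExponent q τ u) (hu : IsCoprime (u - 1) (q : ℤ))
    {x : Ω} (hx0 : x ≠ 0) (hx : x ^ q ∈ Set.range (algebraMap K Ω)) :
    ∃ (η : Ω) (y : K), η ^ q = 1 ∧ x = η * algebraMap K Ω y := by
  -- The cocycle `σ ↦ σ x / x` is the coboundary of `(τ x / x) ^ a`, `a` inverting `u - 1` mod `q`.
  obtain ⟨a, b, hab⟩ := hu
  obtain ⟨γ, hγ, hτx⟩ := exists_apply_eq_mul_of_pow_mem_range hx τ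
  have hγ0 : γ ≠ 0 := (IsUnit.of_pow_eq_one hγ (NeZero.ne q)).ne_zero
  have hη : (γ ^ a) ^ q = 1 := by rw [← zpow_natCast, zpow_comm, zpow_natCast, hγ, one_zpow]
  have div_fixed : ∀ σ : Gal(Ω/K), σ (x / γ ^ a) = x / γ ^ a := by
    intro σ
    obtain ⟨s, hs⟩ := exists_isCyclotomicExponent q σ
    obtain ⟨α, hα, hσx⟩ := exists_apply_eq_mul_of_pow_mem_range hx σ
    have hα0 : α ≠ 0 := (IsUnit.of_pow_eq_one hα (NeZero.ne q)).ne_zero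
    have cocycle_comm : γ ^ s * α = α ^ u * γ := by
      have := DFunLike.congr_fun (mul_comm' σ τ) x
      rw [AlgEquiv.mul_apply, AlgEquiv.mul_apply, hτx, hσx, map_mul, map_mul, hσx, hτx, hs hγ,
        hτ hα, ← mul_assoc, ← mul_assoc] at this
      exact mul_right_cancel₀ hx0 this
    have zpow_sub_one_eq : γ ^ (s - 1) = α ^ (u - 1) := by
      rw [zpow_sub_one₀ hγ0, zpow_sub_one₀ hα0]
      field_simp
      linear_combination cocycle_comm
    have σ_zpow : σ (γ ^ a) = α * γ ^ a := calc
      σ (γ ^ a) = (γ ^ (s - 1)) ^ a * γ ^ a := by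
        rw [map_zpow₀, hs hγ, ← mul_zpow, ← zpow_add_one₀ hγ0, sub_add_cancel]
      _ = α ^ (1 - q * b) * γ ^ a := by
        rw [zpow_sub_one_eq, ← zpow_mul,
          show (u - 1) * a = 1 - q * b by linear_combination hab]
      _ = α * γ ^ a := by
        rw [zpow_sub₀ hα0, zpow_mul, zpow_natCast, hα, one_zpow, div_one, zpow_one]
    rw [map_div₀, hσx, σ_zpow, mul_div_mul_left _ _ hα0]
  obtain ⟨y, hy⟩ := (InfiniteGalois.mem_range_algebraMap_iff_fixed _).2 div_fixed
  exact ⟨γ ^ a, y, hη, by rw [hy, mul_div_cancel₀ _ (zpow_ne_zero a hγ0)]⟩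

variable (K Ω) in
/-- The extension `K(√[q]{K^×})` of `K` inside `Ω`, generated by the `q`-th roots of elements
of `K`; for `q ≠ 0` it does not matter that the root `0` of `0` is included. -/
def radicalExtension (q : ℕ) : IntermediateField K Ω :=
  adjoin K {x : Ω | x ^ q ∈ Set.range (algebraMap K Ω)}

lemma radicalExtension_mono {m q : ℕ} (h : m ∣ q) :
    radicalExtension K Ω m ≤ radicalExtension K Ω q := by
  obtain ⟨k, rfl⟩ := h
  refine adjoin.mono _ _ _ ?_
  rintro x ⟨y, hy⟩
  exact ⟨y ^ k, by rw [map_pow, hy, pow_mul]⟩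

lemma zpow_apply_eq_zpow_mul {g : Gal(Ω/K)} {α x : Ω} (hα0 : α ≠ 0) (hα : g α = α)
    (hx : g x = α * x) (k : ℤ) : (g ^ k) x = α ^ k * x := by
  induction k with
  | zero => simp
  | succ i ih =>
    rw [add_comm, zpow_one_add, AlgEquiv.mul_apply, ih, map_mul, map_zpow₀, hα, hx,
      zpow_one_add₀ hα0]
    ring
  | pred i ih =>
    rw [sub_eq_neg_add, zpow_add, zpow_neg_one, AlgEquiv.mul_apply, ih, AlgEquiv.aut_inv,
      AlgEquiv.symm_apply_eq, map_mul, map_zpow₀, hα, hx, zpow_add₀ hα0, zpow_neg_one]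
    field_simp

section Commutator

variable {q : ℕ} [NeZero q] {g : Gal(Ω/K)}

lemma pow_apply_eq_self_of_mem_radicalExtension (hg : ∀ w : Ω, w ^ q = 1 → g w = w) {z : Ω}
    (hz : z ∈ radicalExtension K Ω q) :
    (g ^ q) z = z := by
  refine apply_eq_apply_of_mem_adjoin (σ := g ^ q) (τ := 1) (fun x hx ↦ ?_) hz
  obtain ⟨α, hα, hgx⟩ := exists_apply_eq_mul_of_pow_mem_range hx g
  have hα0 : α ≠ 0 := (IsUnit.of_pow_eq_one hα (NeZero.ne q)).ne_zero
  have := zpow_apply_eq_zpow_mul hα0 (hg α hα) hgx q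
  rwa [zpow_natCast, zpow_natCast, hα, one_mul] at this

lemma apply_apply_eq_zpow_apply_apply_of_mem_radicalExtension
    (hg : ∀ w : Ω, w ^ q = 1 → g w = w) {τ : Gal(Ω/K)} {u : ℤ}
    (hτ : IsCyclotomicExponent q τ u) {z : Ω} (hz : z ∈ radicalExtension K Ω q) :
    τ (g z) = (g ^ u) (τ z) := by
  refine apply_eq_apply_of_mem_adjoin (σ := τ * g) (τ := g ^ u * τ) (fun x hx ↦ ?_) hz
  obtain ⟨α, hα, hgx⟩ := exists_apply_eq_mul_of_pow_mem_range hx g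
  obtain ⟨β, hβ, hτx⟩ := exists_apply_eq_mul_of_pow_mem_range hx τ
  have hα0 : α ≠ 0 := (IsUnit.of_pow_eq_one hα (NeZero.ne q)).ne_zero
  have g_zpow_β : (g ^ u) β = β := by
    have := zpow_apply_eq_zpow_mul (x := β) one_ne_zero (map_one g) (by rw [hg β hβ, one_mul]) u
    rwa [one_zpow, one_mul] at this
  rw [AlgEquiv.mul_apply, AlgEquiv.mul_apply, hgx, hτx, map_mul, map_mul, hτ hα, hτx, g_zpow_β,
    zpow_apply_eq_zpow_mul hα0 (hg α hα) hgx]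
  ring

theorem apply_eq_self_of_mem_radicalExtension (hg : ∀ w : Ω, w ^ q = 1 → g w = w)
    (L : IntermediateField K Ω) [IsAbelianGalois K L] {τ : Gal(Ω/K)} {u : ℤ}
    (hτ : IsCyclotomicExponent q τ u) (hu : IsCoprime (u - 1) (q : ℤ))
    {z : Ω} (hzL : z ∈ L) (hz : z ∈ radicalExtension K Ω q) : g z = z := by
  have zpow_u_apply : (g ^ u) z = g z := τ.injective <| by
    rw [apply_apply_eq_zpow_apply_apply_of_mem_radicalExtension hg hτ hz,
      apply_apply_comm_of_mem L _ _ hzL]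
  have zpow_sub_one_mem : g ^ (u - 1) ∈ MulAction.stabilizer Gal(Ω/K) z := by
    rw [← neg_add_eq_sub, zpow_add, zpow_neg_one, MulAction.mem_stabilizer_iff, mul_smul,
      inv_smul_eq_iff]
    exact zpow_u_apply
  have pow_mem : g ^ (q : ℤ) ∈ MulAction.stabilizer Gal(Ω/K) z := by
    rw [zpow_natCast]
    exact pow_apply_eq_self_of_mem_radicalExtension hg hz
  obtain ⟨a, b, hab⟩ := hu
  have g_mem := mul_mem (zpow_mem zpow_sub_one_mem a) (zpow_mem pow_mem b)
  rwa [← zpow_mul, ← zpow_mul, ← zpow_add, mul_comm _ a, mul_comm _ b, hab, zpow_one] at g_mem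

end Commutator

lemma exists_mem_fixingSubgroup_apply_eq_of_pow_eq_one [Normal K Ω] {ℓ t : ℕ} (hℓ : ℓ.Prime)
    (hℓ2 : ℓ ≠ 2) (ht : t ≠ 0) (L : IntermediateField K Ω) {ξ : Ω}
    (hξ : IsPrimitiveRoot ξ (ℓ ^ (t + 1))) (hξL : ξ ∉ L) (hξL' : ξ ^ ℓ ∈ L) {g : Gal(Ω/K)}
    (hg : g (ξ ^ ℓ) = ξ ^ ℓ) (n : ℕ) :
    ∃ σ ∈ L.fixingSubgroup, ∀ w : Ω, w ^ ℓ ^ n = 1 → σ w = g w := by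
  have : NeZero ℓ := ⟨hℓ.ne_zero⟩
  obtain ⟨σ, hσL, hσξ⟩ := exists_mem_fixingSubgroup_apply_ne L (isSeparable_of_isPrimitiveRoot hξ)
    hξL
  have hξℓ : IsPrimitiveRoot (ξ ^ ℓ) (ℓ ^ t) := hξ.pow (NeZero.pos _) (pow_succ' ℓ t)
  obtain ⟨u, hu⟩ := exists_isCyclotomicExponent (ℓ ^ (n + 1 + t)) σ
  obtain ⟨v, hv⟩ := exists_isCyclotomicExponent (ℓ ^ (n + 1 + t)) g
  have t_dvd : ℓ ^ t ∣ ℓ ^ (n + 1 + t) := pow_dvd_pow ℓ (by lia)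
  obtain ⟨k, hk⟩ := exists_pow_modEq_prime_pow hℓ hℓ2 ht
    ((hu.apply_eq_self_iff t_dvd hξℓ (NeZero.ne _)).1 ((L.mem_fixingSubgroup_iff σ).1 hσL _ hξL'))
    ((hu.apply_eq_self_iff (pow_dvd_pow ℓ (by lia)) hξ (NeZero.ne _)).not.1 hσξ)
    ((hv.apply_eq_self_iff t_dvd hξℓ (NeZero.ne _)).1 hg) (n + 1)
  refine ⟨σ ^ k, pow_mem hσL k, fun w hw ↦ (hu.pow k).apply_eq_apply_of_modEq hv hk ?_⟩
  rw [add_assoc, pow_add, pow_mul, hw, one_pow]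

end Fields

section AlgebraicClosure

variable {K : Type*} [Field K]

lemma exists_isPrimitiveRoot_algebraicClosure {n : ℕ} (hn : (n : K) ≠ 0) :
    ∃ ζ : AlgebraicClosure K, IsPrimitiveRoot ζ n := by
  have : NeZero (n : AlgebraicClosure K) := ⟨by simpa using (map_ne_zero (algebraMap K _)).2 hn⟩
  exact HasEnoughRootsOfUnity.exists_primitiveRoot _ n

instance isAbelianGalois_cyclo2P : IsAbelianGalois K (cyclo2P K) := by
  let S : Set ℕ := {n | (n = 4 ∨ n.Prime ∧ Odd n) ∧ ¬ ringChar K ∣ n}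
  have hS : ∀ n ∈ S, ∃ ζ : AlgebraicClosure K, IsPrimitiveRoot ζ n :=
    fun n hn ↦ exists_isPrimitiveRoot_algebraicClosure ((ringChar.spec K n).not.2 hn.2)
  have cyclo2P_eq : cyclo2P K = adjoin K {x | ∃ n ∈ S, n ≠ 0 ∧ x ^ n = 1} := by
    rw [← adjoin_isPrimitiveRoot_eq_adjoin_pow_eq_one (fun h ↦ h.2 (dvd_zero _)) hS]
    simp only [cyclo2P, S, Set.mem_ofPred_eq, and_assoc]
  have := isCyclotomicExtension_adjoin_of_exists_isPrimitiveRoot S K (AlgebraicClosure K)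
    fun n hn _ ↦ hS n hn
  rw [cyclo2P_eq]
  exact IsCyclotomicExtension.isAbelianGalois S K _

lemma exists_mem_radicalExtension_of_mem_adjoin_radInf {ℓ : ℕ} {z : AlgebraicClosure K}
    (hz : z ∈ adjoin K (Units.val '' (radInf K ℓ : Set (AlgebraicClosure K)ˣ))) :
    ∃ n, z ∈ radicalExtension K (AlgebraicClosure K) (ℓ ^ n) := by
  have mono : Monotone fun n ↦ radicalExtension K (AlgebraicClosure K) (ℓ ^ n) :=
    fun m n hmn ↦ radicalExtension_mono (pow_dvd_pow ℓ hmn)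
  have radInf_le : adjoin K (Units.val '' (radInf K ℓ : Set (AlgebraicClosure K)ˣ)) ≤
      ⨆ n, radicalExtension K (AlgebraicClosure K) (ℓ ^ n) := by
    rw [adjoin_le_iff]
    rintro _ ⟨x, ⟨n, hx⟩, rfl⟩
    exact le_iSup (fun n ↦ radicalExtension K (AlgebraicClosure K) (ℓ ^ n)) n
      (subset_adjoin _ _ hx)
  have := radInf_le hz
  rwa [← SetLike.mem_coe, coe_iSup_of_directed mono.directed_le, Set.mem_iUnion] at this

lemma exists_isPrimitiveRoot_of_pow_prime_pow_eq_one {M : Type*} [CommMonoid M] {ℓ n : ℕ}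
    (hℓ : ℓ.Prime) {x : M} (hx : x ^ ℓ ^ n = 1) : ∃ k, IsPrimitiveRoot x (ℓ ^ k) := by
  obtain ⟨k, -, hk⟩ := (Nat.dvd_prime_pow hℓ).1 (orderOf_dvd_of_pow_eq_one hx)
  exact ⟨k, hk ▸ IsPrimitiveRoot.orderOf x⟩

variable {ℓ : ℕ} {t : ℕ∞} {L : IntermediateField K (AlgebraicClosure K)}

lemma exists_isCyclotomicExponent_algebraicClosure_isCoprime_sub_one (hℓ : ℓ.Prime)
    (hℓK : (ℓ : K) ≠ 0) (hζ : ¬ ∃ z : K, IsPrimitiveRoot z ℓ) (n : ℕ) :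
    ∃ (τ : Gal(AlgebraicClosure K/K)) (u : ℤ), IsCyclotomicExponent (ℓ ^ n) τ u ∧
      IsCoprime (u - 1) ((ℓ ^ n : ℕ) : ℤ) := by
  obtain ⟨ζ, hζ'⟩ := exists_isPrimitiveRoot_algebraicClosure hℓK
  refine exists_isCyclotomicExponent_isCoprime_sub_one hℓ hζ' ?_ n
  rintro ⟨z, rfl⟩
  exact hζ ⟨z, hζ'.of_map_of_injective (algebraMap K (AlgebraicClosure K)).injective⟩

theorem unitsIn_inf_radInf_eq_closure_sup_baseUnits [IsAbelianGalois K L] (hℓ : ℓ.Prime)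
    (hℓK : (ℓ : K) ≠ 0)
    (ht : ∀ (n : ℕ) (x : AlgebraicClosure K), IsPrimitiveRoot x (ℓ ^ n) → (x ∈ L ↔ n ≤ t))
    (hζ : ¬ ∃ z : K, IsPrimitiveRoot z ℓ) :
    unitsIn L ⊓ radInf K ℓ = Subgroup.closure (pPowRootsUnits K ℓ t) ⊔ baseUnits K := by
  have : NeZero ℓ := ⟨hℓ.ne_zero⟩
  apply le_antisymm
  · rintro x ⟨hxL, n, y₀, hy₀⟩
    obtain ⟨τ, u, hτ, hu⟩ :=
      exists_isCyclotomicExponent_algebraicClosure_isCoprime_sub_one hℓ hℓK hζ n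
    obtain ⟨η, y, hη, hxy⟩ := exists_eq_mul_algebraMap_of_pow_mem_range (hτ.restrictNormal L) hu
      (x := ⟨x, hxL⟩) (by simp [Subtype.ext_iff]) ⟨y₀, Subtype.ext hy₀⟩
    have hxy' : (x : AlgebraicClosure K) = η * algebraMap K (AlgebraicClosure K) y :=
      congrArg Subtype.val hxy
    have hη' : (η : AlgebraicClosure K) ^ ℓ ^ n = 1 := congrArg Subtype.val hη
    have hy0 : y ≠ 0 := by
      rintro rfl
      exact x.ne_zero (by rw [hxy', map_zero, mul_zero])
    obtain ⟨k, hk⟩ := exists_isPrimitiveRoot_of_pow_prime_pow_eq_one hℓ hη'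
    obtain rfl : x =
        Units.mk0 (η : AlgebraicClosure K) (hk.ne_zero (NeZero.ne _)) *
          Units.map (algebraMap K (AlgebraicClosure K)).toMonoidHom (Units.mk0 y hy0) :=
      Units.ext hxy'
    exact Subgroup.mul_mem_sup (Subgroup.subset_closure ⟨k, (ht k η hk).1 η.2, hk⟩) ⟨_, rfl⟩
  · refine sup_le ((Subgroup.closure_le _).2 ?_) ?_
    · rintro x ⟨n, hn, hx⟩
      exact ⟨(ht n x hx).2 hn, n, 1, by rw [map_one, hx.pow_eq_one]⟩
    · rintro _ ⟨y, rfl⟩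
      exact ⟨L.algebraMap_mem y, 0, y, by simp⟩

lemma exists_mem_fixingSubgroup_apply_eq_of_fixes_pPowRoots (hℓ : ℓ.Prime) (hℓ2 : ℓ ≠ 2)
    (hℓK : (ℓ : K) ≠ 0) (ht1 : 1 ≤ t)
    (ht : ∀ (n : ℕ) (x : AlgebraicClosure K), IsPrimitiveRoot x (ℓ ^ n) → (x ∈ L ↔ n ≤ t))
    {g : Gal(AlgebraicClosure K/K)} (hg : ∀ x ∈ pPowRoots K ℓ t, g x = x) (n : ℕ) :
    ∃ σ ∈ L.fixingSubgroup, ∀ w : AlgebraicClosure K, w ^ ℓ ^ n = 1 → σ w = g w := by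
  induction t with
  | top =>
    refine ⟨1, one_mem _, fun w hw ↦ ?_⟩
    obtain ⟨k, hk⟩ := exists_isPrimitiveRoot_of_pow_prime_pow_eq_one hℓ hw
    exact (hg w ⟨k, le_top, hk⟩).symm
  | coe m =>
    obtain ⟨ξ, hξ⟩ := exists_isPrimitiveRoot_algebraicClosure (K := K) (n := ℓ ^ (m + 1))
      (by exact_mod_cast pow_ne_zero (m + 1) hℓK)
    have hξℓ : IsPrimitiveRoot (ξ ^ ℓ) (ℓ ^ m) :=
      hξ.pow (pow_pos hℓ.pos _) (pow_succ' ℓ m)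
    refine exists_mem_fixingSubgroup_apply_eq_of_pow_eq_one hℓ hℓ2 ?_ L hξ ?_
      ((ht m _ hξℓ).2 le_rfl) (hg _ ⟨m, le_rfl, hξℓ⟩) n
    · rintro rfl
      simp at ht1
    · rw [ht _ _ hξ]
      norm_cast
      lia

lemma inf_radicalExtension_le_adjoin_pPowRoots [IsAbelianGalois K L] (hℓ : ℓ.Prime)
    (hℓK : (ℓ : K) ≠ 0) (ht1 : 1 ≤ t)
    (ht : ∀ (n : ℕ) (x : AlgebraicClosure K), IsPrimitiveRoot x (ℓ ^ n) → (x ∈ L ↔ n ≤ t))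
    (hζ : ¬ ∃ z : K, IsPrimitiveRoot z ℓ) (n : ℕ) :
    L ⊓ radicalExtension K (AlgebraicClosure K) (ℓ ^ n) ≤ adjoin K (pPowRoots K ℓ t) := by
  rintro z ⟨hzL, hz⟩
  have : NeZero ℓ := ⟨hℓ.ne_zero⟩
  have hℓ2 : ℓ ≠ 2 := by
    rintro rfl
    exact hζ ⟨-1, IsPrimitiveRoot.neg_one (ringChar K) fun h ↦ hℓK ((ringChar.spec K 2).2 h.dvd)⟩
  have z_separable : IsSeparable K z := by
    have := Algebra.IsSeparable.isSeparable K (⟨z, hzL⟩ : L)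
    rwa [IsSeparable, minpoly_eq] at this
  by_contra hzt
  obtain ⟨g, hg, hgz⟩ := exists_mem_fixingSubgroup_apply_ne _ z_separable hzt
  obtain ⟨σ, hσL, hσ⟩ := exists_mem_fixingSubgroup_apply_eq_of_fixes_pPowRoots hℓ hℓ2 hℓK ht1 ht
    (fun x hx ↦ (mem_fixingSubgroup_iff _ g).1 hg x (subset_adjoin _ _ hx)) n
  have fixes_roots : ∀ w : AlgebraicClosure K, w ^ ℓ ^ n = 1 → (σ⁻¹ * g) w = w := fun w hw ↦ by
    rw [AlgEquiv.mul_apply, ← hσ w hw, ← AlgEquiv.mul_apply, inv_mul_cancel, AlgEquiv.one_apply]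
  obtain ⟨τ, u, hτ, hu⟩ :=
    exists_isCyclotomicExponent_algebraicClosure_isCoprime_sub_one hℓ hℓK hζ n
  have fixes_z := apply_eq_self_of_mem_radicalExtension fixes_roots L hτ hu hzL hz
  rw [AlgEquiv.mul_apply, AlgEquiv.aut_inv, AlgEquiv.symm_apply_eq,
    (L.mem_fixingSubgroup_iff σ).1 hσL z hzL] at fixes_z
  exact hgz fixes_z

theorem inf_adjoin_radInf_eq_adjoin_pPowRoots [IsAbelianGalois K L] (hℓ : ℓ.Prime)
    (hℓK : (ℓ : K) ≠ 0) (ht1 : 1 ≤ t)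
    (ht : ∀ (n : ℕ) (x : AlgebraicClosure K), IsPrimitiveRoot x (ℓ ^ n) → (x ∈ L ↔ n ≤ t))
    (hζ : ¬ ∃ z : K, IsPrimitiveRoot z ℓ) :
    L ⊓ adjoin K (Units.val '' (radInf K ℓ : Set (AlgebraicClosure K)ˣ)) =
      adjoin K (pPowRoots K ℓ t) := by
  apply le_antisymm
  · rintro z ⟨hzL, hz⟩
    obtain ⟨n, hzn⟩ := exists_mem_radicalExtension_of_mem_adjoin_radInf hz
    exact inf_radicalExtension_le_adjoin_pPowRoots hℓ hℓK ht1 ht hζ n ⟨hzL, hzn⟩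
  · rw [adjoin_le_iff]
    rintro x ⟨n, hn, hx⟩
    have hx0 : x ≠ 0 := hx.ne_zero (pow_ne_zero n hℓ.ne_zero)
    exact ⟨(ht n x hx).2 hn, subset_adjoin _ _
      ⟨Units.mk0 x hx0, ⟨n, 1, by rw [map_one, Units.val_mk0, hx.pow_eq_one]⟩, rfl⟩⟩

end AlgebraicClosure

theorem stmt0_general (K : Type*) [Field K] (L : IntermediateField K (AlgebraicClosure K))
    [IsAbelianGalois K L] (ℓ : ℕ) (hℓ : ℓ.Prime) (hchar : ringChar K ≠ ℓ) (t : ℕ∞) (ht1 : 1 ≤ t)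
    (ht : ∀ (n : ℕ) (x : AlgebraicClosure K), IsPrimitiveRoot x (ℓ ^ n) → (x ∈ L ↔ n ≤ t))
    (hnK : ¬ ∃ z : K, IsPrimitiveRoot z ℓ) :
    unitsIn L ⊓ radInf K ℓ = Subgroup.closure (pPowRootsUnits K ℓ t) ⊔ baseUnits K ∧
    L ⊓ adjoin K (Units.val '' (radInf K ℓ : Set (AlgebraicClosure K)ˣ)) =
      adjoin K (pPowRoots K ℓ t) := by
  have hℓK : (ℓ : K) ≠ 0 := fun h ↦ hchar (CharP.ringChar_of_prime_eq_zero hℓ h)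
  exact ⟨unitsIn_inf_radInf_eq_closure_sup_baseUnits hℓ hℓK ht hnK,
    inf_adjoin_radInf_eq_adjoin_pPowRoots hℓ hℓK ht1 ht hnK⟩

/-- Theorem 1.1 (first part): if `ℓ` is odd or `ζ₄ ∈ K`, `ℓ ≠ char K`, `t ≥ 1` is the largest
element of `ℕ ∪ {∞}` with `ζ_{ℓ^t} ∈ K(ζ_{2𝒫})`, and `ζ_ℓ ∉ K`, then
`K(ζ_{2𝒫}) ∩ √[ℓ^∞]{K^×} = ⟨ζ_{ℓ^t}, K^×⟩` and
`K(ζ_{2𝒫}) ∩ K(√[ℓ^∞]{K^×}) = K(ζ_{ℓ^t})`. -/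
theorem stmt0 (K : Type*) [Field K] (ℓ : ℕ) (hℓ : ℓ.Prime) (hchar : ringChar K ≠ ℓ)
    (hodd : Odd ℓ ∨ ∃ z : K, IsPrimitiveRoot z 4)
    (t : ℕ∞) (ht1 : 1 ≤ t)
    (htin : ∀ n : ℕ, (n : ℕ∞) ≤ t → ∀ x : AlgebraicClosure K,
      IsPrimitiveRoot x (ℓ ^ n) → x ∈ cyclo2P K)
    (htmax : ∀ n : ℕ, t < (n : ℕ∞) → ∀ x : AlgebraicClosure K,
      IsPrimitiveRoot x (ℓ ^ n) → x ∉ cyclo2P K)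
    (hnK : ¬ ∃ z : K, IsPrimitiveRoot z ℓ) :
    unitsIn (cyclo2P K) ⊓ radInf K ℓ =
      Subgroup.closure (pPowRootsUnits K ℓ t) ⊔ baseUnits K ∧
    cyclo2P K ⊓
        IntermediateField.adjoin K (Units.val '' (radInf K ℓ : Set (AlgebraicClosure K)ˣ)) =
      IntermediateField.adjoin K (pPowRoots K ℓ t) := by
  have ht : ∀ (n : ℕ) (x : AlgebraicClosure K), IsPrimitiveRoot x (ℓ ^ n) →
      (x ∈ cyclo2P K ↔ n ≤ t) := fun n x hx ↦
    ⟨fun hx_mem ↦ not_lt.1 fun hlt ↦ htmax n hlt x hx hx_mem, fun hn ↦ htin n hn x hx⟩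
  exact stmt0_general K (cyclo2P K) ℓ hℓ hchar t ht1 ht hnK

end
end

section
/- Let p be a prime and ℓ ≠ p a prime. Then the extension of 𝔽_p generated by all roots of unity (in a fixed algebraic closure of 𝔽_p) whose order is 4 or an odd prime different from p contains every root of unity of ℓ-power order. -/
noncomputable section

open IntermediateField

/-!
In positive characteristic all roots of unity already lie in the field generated by those of odd
prime order. A root of unity `x` has some degree `m` over `𝔽_p`, and a finite subfield whose degree
is divisible by `m` contains `x`; by taking compositums one may let `m` be a prime power `ℓ ^ k`.
If `q` is a prime modulo which `p` has order `ℓ ^ k`, then `𝔽_p(ζ_q)` has degree divisible by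
`ℓ ^ k`. Such a `q` is a prime divisor other than `ℓ` of `Φ_{ℓ ^ k}(p)`; it exists for `2 ≤ k`
because then `ℓ ^ 2` does not divide `Φ_{ℓ ^ k}(p)`, although `ℓ < Φ_{ℓ ^ k}(p)`.
-/

section PrimeOrder

variable {ℓ : ℕ}

theorem exists_prime_ne_dvd_of_not_sq_dvd {n : ℕ} (hn : n ≠ 1) (hnℓ : n ≠ ℓ)
    (hsq : ¬ ℓ ^ 2 ∣ n) : ∃ q : ℕ, q.Prime ∧ q ≠ ℓ ∧ q ∣ n := by
  by_cases hℓn : ℓ ∣ n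
  · obtain ⟨m, rfl⟩ := hℓn
    obtain ⟨q, hq, hqm⟩ := Nat.exists_prime_and_dvd (n := m) (by rintro rfl; simp at hnℓ)
    refine ⟨q, hq, ?_, hqm.mul_left ℓ⟩
    rintro rfl
    exact hsq (by simpa only [sq] using mul_dvd_mul_left q hqm)
  · obtain ⟨q, hq, hqn⟩ := Nat.exists_prime_and_dvd hn
    exact ⟨q, hq, by rintro rfl; exact hℓn hqn, hqn⟩

theorem not_prime_sq_dvd_geom_sum_pow (hℓ : ℓ.Prime) (a : ℤ) :
    ¬ (ℓ : ℤ) ^ 2 ∣ ∑ i ∈ Finset.range ℓ, (a ^ ℓ) ^ i := by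
  have : Fact ℓ.Prime := ⟨hℓ⟩
  intro hdvd
  have ha_mod : (ℓ : ℤ) ∣ a - 1 := by
    have hsum := (ZMod.intCast_zmod_eq_zero_iff_dvd _ ℓ).mpr
      ((dvd_pow_self (ℓ : ℤ) two_ne_zero).trans hdvd)
    push_cast [ZMod.pow_card] at hsum
    have hgeom := geom_sum_mul (a : ZMod ℓ) ℓ
    rw [hsum, zero_mul, ZMod.pow_card] at hgeom
    exact (ZMod.intCast_zmod_eq_zero_iff_dvd _ ℓ).mp (by push_cast; exact hgeom.symm)
  have hpow_mod : a ^ ℓ ≡ 1 [ZMOD (ℓ : ℤ) ^ 2] :=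
    (Int.modEq_iff_dvd.mpr (by simpa using dvd_sub_pow_of_dvd_sub ha_mod 1)).symm
  have hsum_mod : ∑ i ∈ Finset.range ℓ, (a ^ ℓ) ^ i ≡ ℓ [ZMOD (ℓ : ℤ) ^ 2] := by
    simpa using Int.ModEq.sum (s := Finset.range ℓ) fun i _ => hpow_mod.pow i
  have hsq : ℓ ^ 2 ∣ ℓ := by exact_mod_cast hsum_mod.dvd_iff.mp hdvd
  exact (Nat.le_of_dvd hℓ.pos hsq).not_gt (by simpa using Nat.pow_lt_pow_right hℓ.one_lt one_lt_two)

theorem lt_geom_sum {P : ℕ} (hP : 1 < P) (hℓ : 1 < ℓ) : ℓ < ∑ i ∈ Finset.range ℓ, P ^ i := by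
  calc ℓ = ∑ i ∈ Finset.range ℓ, 1 := by simp
    _ < ∑ i ∈ Finset.range ℓ, P ^ i :=
      Finset.sum_lt_sum (fun i _ => Nat.one_le_pow i P (by lia)) ⟨1, by simpa using hℓ, by simpa⟩

theorem orderOf_eq_prime_pow_of_geom_sum_eq_zero {R : Type*} [Ring R] (hℓ : ℓ.Prime)
    (hℓR : (ℓ : R) ≠ 0) {x : R} {k : ℕ} (hx : ∑ i ∈ Finset.range ℓ, (x ^ ℓ ^ k) ^ i = 0) :
    orderOf x = ℓ ^ (k + 1) := by
  have : Fact ℓ.Prime := ⟨hℓ⟩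
  refine orderOf_eq_prime_pow (fun hone => hℓR (by simpa [hone] using hx)) ?_
  have hgeom := geom_sum_mul (x ^ ℓ ^ k) ℓ
  rw [hx, zero_mul] at hgeom
  rw [pow_succ, pow_mul, sub_eq_zero.mp hgeom.symm]

theorem exists_prime_orderOf_eq_prime_pow (hℓ : ℓ.Prime) {a : ℕ} (ha : 1 < a) (k : ℕ) :
    ∃ q : ℕ, q.Prime ∧ orderOf (a : ZMod q) = ℓ ^ (k + 2) := by
  set S := ∑ i ∈ Finset.range ℓ, (a ^ ℓ ^ (k + 1)) ^ i
  have hℓS : ℓ < S :=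
    lt_geom_sum (Nat.one_lt_pow (pow_ne_zero _ hℓ.ne_zero) ha) hℓ.one_lt
  have hsq : ¬ ℓ ^ 2 ∣ S := by
    have := not_prime_sq_dvd_geom_sum_pow hℓ (a ^ ℓ ^ k)
    rw [← pow_mul, ← pow_succ] at this
    exact_mod_cast this
  obtain ⟨q, hq, hqℓ, hqS⟩ :=
    exists_prime_ne_dvd_of_not_sq_dvd (hℓ.one_lt.trans hℓS).ne' hℓS.ne' hsq
  refine ⟨q, hq, orderOf_eq_prime_pow_of_geom_sum_eq_zero hℓ ?_ ?_⟩
  · rwa [Ne, ZMod.natCast_eq_zero_iff, Nat.prime_dvd_prime_iff_eq hq hℓ]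
  · exact_mod_cast (ZMod.natCast_eq_zero_iff S q).mpr hqS

theorem odd_of_one_lt_orderOf {q : ℕ} (hq : q.Prime) {a : ZMod q} (ha : 1 < orderOf a) :
    Odd q := by
  refine hq.odd_of_ne_two ?_
  rintro rfl
  obtain rfl | rfl := (by decide : ∀ b : ZMod 2, b = 0 ∨ b = 1) a
  all_goals simp at ha

end PrimeOrder

section FiniteBaseField

variable {F L : Type*} [Field F] [Field L] [Algebra F L]

theorem orderOf_card_dvd_finrank_of_isPrimitiveRoot [Finite L] {n : ℕ} {z : L}
    (hz : IsPrimitiveRoot z n) (hn : n ≠ 0) :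
    orderOf (Nat.card F : ZMod n) ∣ Module.finrank F L := by
  have hcard : z ^ Nat.card L = z ^ 1 := by
    have := Fintype.ofFinite L
    rw [Nat.card_eq_fintype_card, FiniteField.pow_card, pow_one]
  rw [(hz.isOfFinOrder hn).pow_eq_pow_iff_modEq, ← hz.eq_orderOf,
    ← ZMod.natCast_eq_natCast_iff, Module.natCard_eq_pow_finrank (K := F)] at hcard
  exact orderOf_dvd_of_pow_eq_one (by exact_mod_cast hcard)

variable [Finite F]

theorem le_of_finrank_dvd_finrank {E₁ E₂ : IntermediateField F L} [FiniteDimensional F E₁]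
    [FiniteDimensional F E₂] (hdvd : Module.finrank F E₁ ∣ Module.finrank F E₂) : E₁ ≤ E₂ := by
  have : Finite E₁ := Module.finite_of_finite F
  have : Finite E₂ := Module.finite_of_finite F
  obtain ⟨f⟩ := FiniteField.nonempty_algHom_of_finrank_dvd hdvd
  rw [← (E₂.val.comp f).fieldRange_of_normal]
  rintro _ ⟨x, rfl⟩
  exact (f x).2

theorem natCast_ne_zero_of_orderOf_card_ne_zero {q : ℕ}
    (hq : orderOf (Nat.card F : ZMod q) ≠ 0) : (q : F) ≠ 0 := by
  have hcoprime : (Nat.card F).Coprime q :=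
    (ZMod.isUnit_iff_coprime _ _).mp (orderOf_ne_zero_iff.mp hq).isUnit
  have hcard : (Nat.card F : F) = 0 := by
    have := Fintype.ofFinite F
    rw [Nat.card_eq_fintype_card, FiniteField.cast_card_eq_zero]
  have hunit := hcoprime.cast (R := F)
  rw [hcard, isCoprime_zero_left] at hunit
  exact hunit.ne_zero

variable [IsSepClosed L] {E : IntermediateField F L}

theorem exists_le_prime_pow_dvd_finrank
    (hE : ∀ q : ℕ, q.Prime → Odd q → ∀ z : L, IsPrimitiveRoot z q → z ∈ E)
    {ℓ : ℕ} (hℓ : ℓ.Prime) (k : ℕ) :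
    ∃ E₀ ≤ E, FiniteDimensional F E₀ ∧ ℓ ^ k ∣ Module.finrank F E₀ := by
  obtain ⟨q, hq, hord⟩ :=
    exists_prime_orderOf_eq_prime_pow hℓ (Finite.one_lt_card (α := F)) k
  have hone_lt : 1 < orderOf (Nat.card F : ZMod q) :=
    hord ▸ Nat.one_lt_pow (by lia) hℓ.one_lt
  have : NeZero (q : F) := ⟨natCast_ne_zero_of_orderOf_card_ne_zero (by lia)⟩
  have : NeZero (q : L) := NeZero.nat_of_injective (algebraMap F L).injective
  obtain ⟨z, hz⟩ := HasEnoughRootsOfUnity.exists_primitiveRoot L q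
  have : FiniteDimensional F F⟮z⟯ :=
    adjoin.finiteDimensional (.of_pow hq.pos (by simpa [hz.pow_eq_one] using isIntegral_one))
  have : Finite F⟮z⟯ := Module.finite_of_finite F
  have hgen : IsPrimitiveRoot (AdjoinSimple.gen F z) q :=
    IsPrimitiveRoot.coe_submonoidClass_iff.mp hz
  refine ⟨F⟮z⟯, ?_, inferInstance, ?_⟩
  · exact adjoin_simple_le_iff.mpr (hE q hq (odd_of_one_lt_orderOf hq hone_lt) z hz)
  · calc ℓ ^ k ∣ ℓ ^ (k + 2) := pow_dvd_pow ℓ (by lia)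
      _ = orderOf (Nat.card F : ZMod q) := hord.symm
      _ ∣ Module.finrank F F⟮z⟯ := orderOf_card_dvd_finrank_of_isPrimitiveRoot hgen hq.ne_zero

theorem exists_le_dvd_finrank
    (hE : ∀ q : ℕ, q.Prime → Odd q → ∀ z : L, IsPrimitiveRoot z q → z ∈ E)
    {m : ℕ} (hm : m ≠ 0) :
    ∃ E₀ ≤ E, FiniteDimensional F E₀ ∧ m ∣ Module.finrank F E₀ := by
  induction m using Nat.recOnPrimeCoprime with
  | zero => contradiction
  | prime_pow ℓ k hℓ => exact exists_le_prime_pow_dvd_finrank hE hℓ k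
  | coprime a b ha hb hab iha ihb =>
    obtain ⟨E₁, hE₁, _, haE₁⟩ := iha (by lia)
    obtain ⟨E₂, hE₂, _, hbE₂⟩ := ihb (by lia)
    exact ⟨E₁ ⊔ E₂, sup_le hE₁ hE₂, inferInstance, hab.mul_dvd_of_dvd_of_dvd
      (haE₁.trans (finrank_dvd_of_le_right le_sup_left))
      (hbE₂.trans (finrank_dvd_of_le_right le_sup_right))⟩

theorem mem_of_isIntegral_of_forall_isPrimitiveRoot_mem
    (hE : ∀ q : ℕ, q.Prime → Odd q → ∀ z : L, IsPrimitiveRoot z q → z ∈ E)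
    {x : L} (hx : IsIntegral F x) : x ∈ E := by
  have : FiniteDimensional F F⟮x⟯ := adjoin.finiteDimensional hx
  obtain ⟨E₀, hE₀, _, hdvd⟩ :=
    exists_le_dvd_finrank hE (Module.finrank_pos (R := F) (M := F⟮x⟯)).ne'
  exact hE₀ (le_of_finrank_dvd_finrank hdvd (mem_adjoin_simple_self F x))

end FiniteBaseField

theorem mem_cyclo2P_of_isPrimitiveRoot {K : Type*} [Field K] {q : ℕ} (hq : q.Prime)
    (hodd : Odd q) {z : AlgebraicClosure K} (hz : IsPrimitiveRoot z q) : z ∈ cyclo2P K := by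
  have : NeZero q := ⟨hq.ne_zero⟩
  have hq0 : (q : AlgebraicClosure K) ≠ 0 := hz.neZero'.out
  refine subset_adjoin K _ ⟨q, .inr ⟨hq, hodd⟩, fun hdvd => hq0 ?_, hz⟩
  rw [← map_natCast (algebraMap K _), (ringChar.spec K q).mpr hdvd, map_zero]

theorem stmt15_general {K : Type*} [Field K] (p : ℕ) [Fact p.Prime] [CharP K p]
    {x : AlgebraicClosure K} (hx : IsOfFinOrder x) : x ∈ cyclo2P K := by
  let : Algebra (ZMod p) K := ZMod.algebra K p
  obtain ⟨n, hn, hxn⟩ := isOfFinOrder_iff_pow_eq_one.mp hx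
  have hint : IsIntegral (ZMod p) x := .of_pow hn (hxn ▸ isIntegral_one)
  exact mem_of_isIntegral_of_forall_isPrimitiveRoot_mem
    (E := (cyclo2P K).restrictScalars (ZMod p))
    (fun _ hq hodd _ hz => mem_cyclo2P_of_isPrimitiveRoot hq hodd hz) hint

/-- Remark 6.2: for primes `p` and `ℓ ≠ p`, the field `𝔽_p(ζ_{2𝒫})` contains all roots of
unity of `ℓ`-power order. -/
theorem stmt15 (p ℓ : ℕ) [hp : Fact p.Prime] (hℓ : ℓ.Prime) (hne : ℓ ≠ p) :
    ∀ (x : AlgebraicClosure (ZMod p)) (n : ℕ), IsPrimitiveRoot x (ℓ ^ n) →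
      x ∈ cyclo2P (ZMod p) :=
  fun _ n hx => stmt15_general p (hx.isOfFinOrder (pow_ne_zero n hℓ.ne_zero))

end
end

section
/- Let char(K) ≠ 2, ζ_4 ∉ K, and let w ≥ 2 be an integer with ζ_{2^w} + ζ_{2^w}^{-1} ∈ K. Let η := ζ_{2^{w+1}}·√(ζ_{2^w} + ζ_{2^w}^{-1} + 2), where √ denotes a square root in K̄. Then η² = (1 + ζ_{2^w})², hence η ∈ {±(1 + ζ_{2^w})}, and K(η) = K(ζ_4). Moreover, ζ_{2^{w+1}}^{-1}·√(ζ_{2^w} + ζ_{2^w}^{-1} + 2) lies in the subgroup ⟨η, ζ_{2^w}, K^×⟩ of K̄^×. -/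
noncomputable section

open IntermediateField

/-!
Write `Z = ζ²`. Since `ζ² (Z + Z⁻¹ + 2) = (1 + Z)²`, the element `η = ζ r` equals `±(1 + Z)`, so
`K(η) = K(Z)`. As `Z` is a root of `X² - (Z + Z⁻¹) X + 1 ∈ K[X]`, the field `K(Z)` has degree at
most `2` over `K`; it contains the fourth roots of unity, which are powers of `Z` but do not lie
in `K`, so one of them already generates it. Finally `ζ⁻¹ r = η Z⁻¹`.
-/

section Adjoin

open Polynomial

variable {K L : Type*} [Field K] [Field L] [Algebra K L]

lemma finrank_adjoin_simple_le_natDegree {p : K[X]} (hp : p ≠ 0) {α : L} (hα : aeval α p = 0) :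
    Module.finrank K K⟮α⟯ ≤ p.natDegree := by
  have hint : IsIntegral K α := isAlgebraic_iff_isIntegral.mp ⟨p, hp, hα⟩
  rw [adjoin.finrank hint]
  exact natDegree_le_of_dvd (minpoly.dvd K α hα) hp

lemma adjoin_simple_eq_of_finrank_le_two {E : IntermediateField K L} [FiniteDimensional K E]
    (hE : Module.finrank K E ≤ 2) {β : L} (hβE : β ∈ E) (hβ : β ∉ (⊥ : IntermediateField K L)) :
    K⟮β⟯ = E := by
  have hle : K⟮β⟯ ≤ E := adjoin_simple_le_iff.mpr hβE
  have : FiniteDimensional K K⟮β⟯ :=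
    FiniteDimensional.of_injective (inclusion hle).toLinearMap (inclusion hle).injective
  have hpos : 0 < Module.finrank K K⟮β⟯ := Module.finrank_pos
  have hne_one : Module.finrank K K⟮β⟯ ≠ 1 := mt finrank_adjoin_simple_eq_one_iff.mp hβ
  exact eq_of_le_of_finrank_le hle (by lia)

lemma adjoin_simple_eq_of_add_inv_mem_bot {α β : L} (hα₀ : α ≠ 0)
    (hα : α + α⁻¹ ∈ (⊥ : IntermediateField K L)) (hβα : β ∈ K⟮α⟯)
    (hβ : β ∉ (⊥ : IntermediateField K L)) : K⟮β⟯ = K⟮α⟯ := by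
  obtain ⟨t, ht⟩ := mem_bot.mp hα
  let p : K[X] := X ^ 2 - C t * X + 1
  have hdeg : p.natDegree = 2 := by unfold p; compute_degree!
  have hp : p ≠ 0 := ne_zero_of_natDegree_gt (n := 0) (by lia)
  have hroot : aeval α p = 0 := by
    simp only [p, map_add, map_sub, map_mul, map_pow, map_one, aeval_X, aeval_C, ht]
    field_simp
    ring
  have : FiniteDimensional K K⟮α⟯ :=
    adjoin.finiteDimensional (isAlgebraic_iff_isIntegral.mp ⟨p, hp, hroot⟩)
  exact adjoin_simple_eq_of_finrank_le_two
    ((finrank_adjoin_simple_le_natDegree hp hroot).trans hdeg.le) hβα hβ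

variable (K) in
lemma adjoin_simple_neg (α : L) : K⟮-α⟯ = K⟮α⟯ := by
  apply le_antisymm <;> rw [adjoin_simple_le_iff]
  · exact neg_mem (mem_adjoin_simple_self K α)
  · exact neg_mem_iff.mp (mem_adjoin_simple_self K (-α))

lemma adjoin_simple_algebraMap_add (c : K) (α : L) : K⟮algebraMap K L c + α⟯ = K⟮α⟯ := by
  apply le_antisymm <;> rw [adjoin_simple_le_iff]
  · exact add_mem (IntermediateField.algebraMap_mem _ c) (mem_adjoin_simple_self K α)
  · exact (add_mem_cancel_left (IntermediateField.algebraMap_mem _ c)).mp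
      (mem_adjoin_simple_self K _)

variable (K) in
lemma adjoin_setOf_isPrimitiveRoot {n : ℕ} [NeZero n] {μ : L} (hμ : IsPrimitiveRoot μ n) :
    adjoin K {x : L | IsPrimitiveRoot x n} = K⟮μ⟯ := by
  apply le_antisymm
  · rw [adjoin_le_iff]
    intro x hx
    obtain ⟨j, -, rfl⟩ := hμ.eq_pow_of_pow_eq_one hx.pow_eq_one
    exact pow_mem (mem_adjoin_simple_self K μ) j
  · exact adjoin_simple_le_iff.mpr (subset_adjoin K _ hμ)

end Adjoin

section RootOfUnity

variable {K L : Type*} [Field K] [Field L] [Algebra K L]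

lemma adjoin_simple_eq_adjoin_isPrimitiveRoot_of_add_inv_mem_bot {m d : ℕ} [NeZero m]
    (hdm : d ∣ m) (hd : ¬ ∃ z : K, IsPrimitiveRoot z d) {Z : L} (hZ : IsPrimitiveRoot Z m)
    (hZK : Z + Z⁻¹ ∈ (⊥ : IntermediateField K L)) :
    K⟮Z⟯ = adjoin K {x : L | IsPrimitiveRoot x d} := by
  obtain ⟨k, rfl⟩ := hdm
  have : NeZero d := ⟨left_ne_zero_of_mul (NeZero.ne (d * k))⟩
  have hroot : IsPrimitiveRoot (Z ^ k) d := hZ.pow (NeZero.pos _) (mul_comm d k)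
  have hroot_notMem : Z ^ k ∉ (⊥ : IntermediateField K L) := by
    intro hmem
    obtain ⟨z, hz⟩ := mem_bot.mp hmem
    exact hd ⟨z, .of_map_of_injective (hz ▸ hroot) (algebraMap K L).injective⟩
  rw [adjoin_setOf_isPrimitiveRoot K hroot]
  exact (adjoin_simple_eq_of_add_inv_mem_bot (hZ.ne_zero (NeZero.ne _)) hZK
    (pow_mem (mem_adjoin_simple_self K Z) k) hroot_notMem).symm

lemma one_add_ne_zero_of_isPrimitiveRoot {R : Type*} [CommRing R] {m : ℕ} (hm : ¬ m ∣ 2) {Z : R}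
    (hZ : IsPrimitiveRoot Z m) : 1 + Z ≠ 0 := by
  intro h
  exact hm (hZ.dvd_of_pow_eq_one 2 (by linear_combination (Z - 1) * h))

lemma mul_sq_eq_one_add_sq_sq {ζ r : L} (hζ : ζ ≠ 0) (hr : r ^ 2 = ζ ^ 2 + (ζ ^ 2)⁻¹ + 2) :
    (ζ * r) ^ 2 = (1 + ζ ^ 2) ^ 2 := by
  rw [mul_pow, hr]
  field_simp
  ring

lemma exists_mem_closure_val_eq_inv_mul {ζ r : L} (hζ : ζ ≠ 0) (hr : r ≠ 0) :
    ∃ u ∈ Subgroup.closure {v : Lˣ | (v : L) = ζ * r ∨ (v : L) = ζ ^ 2}, (u : L) = ζ⁻¹ * r := by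
  refine ⟨Units.mk0 (ζ * r) (mul_ne_zero hζ hr) * (Units.mk0 (ζ ^ 2) (pow_ne_zero 2 hζ))⁻¹,
    mul_mem (Subgroup.subset_closure (.inl rfl)) (inv_mem (Subgroup.subset_closure (.inr rfl))), ?_⟩
  simp only [Units.val_mul, Units.val_inv_eq_inv_val, Units.val_mk0]
  field_simp

theorem stmt16_general (h4 : ¬ ∃ z : K, IsPrimitiveRoot z 4) {m : ℕ} [NeZero m] (hm : 4 ∣ m)
    {ζ : L} (hζ : IsPrimitiveRoot (ζ ^ 2) m)
    (hK : ζ ^ 2 + (ζ ^ 2)⁻¹ ∈ (⊥ : IntermediateField K L))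
    {r : L} (hr : r ^ 2 = ζ ^ 2 + (ζ ^ 2)⁻¹ + 2) :
    (ζ * r) ^ 2 = (1 + ζ ^ 2) ^ 2 ∧
    (ζ * r = 1 + ζ ^ 2 ∨ ζ * r = -(1 + ζ ^ 2)) ∧
    K⟮ζ * r⟯ = adjoin K {x : L | IsPrimitiveRoot x 4} ∧
    ∃ u ∈ Subgroup.closure {v : Lˣ | (v : L) = ζ * r ∨ (v : L) = ζ ^ 2}, (u : L) = ζ⁻¹ * r := by
  have hζ₀ : ζ ≠ 0 := ne_zero_pow two_ne_zero (hζ.ne_zero (NeZero.ne m))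
  have hsq : (ζ * r) ^ 2 = (1 + ζ ^ 2) ^ 2 := mul_sq_eq_one_add_sq_sq hζ₀ hr
  have hη : ζ * r = 1 + ζ ^ 2 ∨ ζ * r = -(1 + ζ ^ 2) := sq_eq_sq_iff_eq_or_eq_neg.mp hsq
  have hη₀ : ζ * r ≠ 0 := by
    have hsum : 1 + ζ ^ 2 ≠ 0 :=
      one_add_ne_zero_of_isPrimitiveRoot (fun h ↦ by simpa using hm.trans h) hζ
    exact ne_zero_pow two_ne_zero (hsq ▸ pow_ne_zero 2 hsum)
  have hadjoin : K⟮ζ * r⟯ = K⟮ζ ^ 2⟯ := by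
    have hsum : K⟮1 + ζ ^ 2⟯ = K⟮ζ ^ 2⟯ := by
      simpa only [map_one] using adjoin_simple_algebraMap_add (1 : K) (ζ ^ 2)
    rcases hη with h | h
    · rw [h, hsum]
    · rw [h, adjoin_simple_neg, hsum]
  exact ⟨hsq, hη,
    hadjoin.trans (adjoin_simple_eq_adjoin_isPrimitiveRoot_of_add_inv_mem_bot hm h4 hζ hK),
    exists_mem_closure_val_eq_inv_mul hζ₀ (right_ne_zero_of_mul hη₀)⟩

end RootOfUnity

/-- Remark 6.3: let `char K ≠ 2`, `ζ₄ ∉ K`, `w ≥ 2` with `ζ_{2^w} + ζ_{2^w}⁻¹ ∈ K`, where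
`ζ_{2^w} = ζ_{2^{w+1}}²`. Let `η := ζ_{2^{w+1}} ⬝ √(ζ_{2^w} + ζ_{2^w}⁻¹ + 2)`. Then
`η² = (1 + ζ_{2^w})²`, hence `η ∈ {±(1 + ζ_{2^w})}`, and `K(η) = K(ζ₄)`; moreover
`ζ_{2^{w+1}}⁻¹ ⬝ √(ζ_{2^w} + ζ_{2^w}⁻¹ + 2) ∈ ⟨η, ζ_{2^w}, K^×⟩`. -/
theorem stmt16 (K : Type*) [Field K] (hchar : ringChar K ≠ 2)
    (h4 : ¬ ∃ z : K, IsPrimitiveRoot z 4)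
    (w : ℕ) (hw : 2 ≤ w) (ζ : AlgebraicClosure K) (hζ : IsPrimitiveRoot ζ (2 ^ (w + 1)))
    (hK : ∃ y : K, algebraMap K (AlgebraicClosure K) y = ζ ^ 2 + (ζ ^ 2)⁻¹)
    (r : AlgebraicClosure K) (hr : r ^ 2 = ζ ^ 2 + (ζ ^ 2)⁻¹ + 2) :
    (ζ * r) ^ 2 = (1 + ζ ^ 2) ^ 2 ∧
    (ζ * r = 1 + ζ ^ 2 ∨ ζ * r = -(1 + ζ ^ 2)) ∧
    IntermediateField.adjoin K {ζ * r} = IntermediateField.adjoin K (primRoots K 4) ∧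
    ∃ u ∈ Subgroup.closure {v : (AlgebraicClosure K)ˣ |
          (v : AlgebraicClosure K) = ζ * r ∨ (v : AlgebraicClosure K) = ζ ^ 2} ⊔ baseUnits K,
      (u : AlgebraicClosure K) = ζ⁻¹ * r := by
  have hζ_sq : IsPrimitiveRoot (ζ ^ 2) (2 ^ w) := hζ.pow (by positivity) (pow_succ' 2 w)
  obtain ⟨hsq, hη, hadjoin, u, hu, hu_eq⟩ :=
    stmt16_general h4 (pow_dvd_pow 2 hw) hζ_sq (mem_bot.mpr hK) hr
  exact ⟨hsq, hη, hadjoin, u, Subgroup.mem_sup_left hu, hu_eq⟩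

end
end

section
/- Let K be a number field, ℓ a prime number that does not ramify in K, and W a finite group of roots of unity (in a fixed algebraic closure of K) of order coprime to ℓ. If a root of unity ζ of order a power of ℓ lies in K(W), then ζ ∈ K. -/
noncomputable section

open IntermediateField

/-!
A root of unity `ζ ∈ K(W)` lies in a field obtained from `K` by adjoining finitely many roots of
unity of order prime to `ℓ`, one at a time. If `w ^ m = 1`, then the derivative `m * w ^ (m - 1)` of
`X ^ m - 1` at `w` lies in the different of `F(w) / F`, hence so does `m`, and the discriminant of
`F(w)` acquires no prime factors beyond those of `m` and of the discriminant of `F`. So `ℓ` stays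
unramified at every step. But if `ζ` has `ℓ`-power order, then `ℓ` ramifies in `ℚ(ζ)` unless
`ζ = 1` or `ζ = -1`.
-/

section Different

open Polynomial

variable (A K L : Type*) {B : Type*} [CommRing A] [Field K] [CommRing B] [Field L]
  [Algebra A K] [Algebra B L] [Algebra A B] [Algebra K L] [Algebra A L]
  [IsScalarTower A K L] [IsScalarTower A B L] [IsDomain A] [IsFractionRing A K]
  [FiniteDimensional K L] [Algebra.IsSeparable K L] [IsIntegralClosure B A L]
  [IsIntegrallyClosed A] [IsDedekindDomain B] [Module.IsTorsionFree A B]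

lemma aeval_derivative_mem_differentIdeal_of_aeval_eq_zero {x : B}
    (hx : Algebra.adjoin K {algebraMap B L x} = ⊤) {f : A[X]} (hf : aeval x f = 0) :
    aeval x (derivative f) ∈ differentIdeal A B := by
  obtain ⟨g, rfl⟩ : minpoly A x ∣ f :=
    minpoly.isIntegrallyClosed_dvd (IsIntegralClosure.isIntegral A L x) hf
  have hderiv : aeval x (derivative (minpoly A x * g)) =
      aeval x (derivative (minpoly A x)) * aeval x g := by
    simp [derivative_mul]
  rw [hderiv]
  exact Ideal.mul_mem_right _ _ (aeval_derivative_mem_differentIdeal A K L x hx)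

lemma natCast_mem_differentIdeal_of_pow_eq_one {x : B}
    (hx : Algebra.adjoin K {algebraMap B L x} = ⊤) {m : ℕ} (hm : x ^ m = 1) :
    (m : B) ∈ differentIdeal A B := by
  rcases eq_or_ne m 0 with rfl | hm0
  · simp
  have hroot : aeval x (X ^ m - 1 : A[X]) = 0 := by simp [hm]
  have hmem : (m : B) * x ^ (m - 1) ∈ differentIdeal A B := by
    simpa [derivative_X_pow] using
      aeval_derivative_mem_differentIdeal_of_aeval_eq_zero A K L hx hroot
  simpa [mul_assoc, pow_sub_one_mul hm0, hm] using Ideal.mul_mem_right x _ hmem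

end Different

section Discriminant

open NumberField

lemma discr_dvd_of_adjoin_eq_top_of_pow_eq_one {K L : Type*} [Field K] [NumberField K] [Field L]
    [NumberField L] [Algebra K L] {w : L} (hw : Algebra.adjoin K {w} = ⊤) {m : ℕ}
    (hm : w ^ m = 1) :
    discr L ∣ (m : ℤ) ^ Module.finrank ℚ L * discr K ^ Module.finrank K L := by
  rcases eq_or_ne m 0 with rfl | hm0
  · simp [Module.finrank_pos.ne']
  have hint : IsIntegral ℤ w := .of_pow hm0.bot_lt (hm ▸ isIntegral_one)
  obtain ⟨x, rfl⟩ : ∃ x : 𝓞 L, algebraMap (𝓞 L) L x = w := ⟨⟨w, hint⟩, rfl⟩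
  have hx : x ^ m = 1 := RingOfIntegers.ext (by simpa using hm)
  have hmem : (m : 𝓞 L) ∈ differentIdeal (𝓞 K) (𝓞 L) :=
    natCast_mem_differentIdeal_of_pow_eq_one (𝓞 K) K L hw hx
  have hnorm : ((differentIdeal (𝓞 K) (𝓞 L)).absNorm : ℤ) ∣ (m : ℤ) ^ Module.finrank ℚ L := by
    have hdvd := Ideal.absNorm_dvd_norm_of_mem hmem
    rwa [← map_natCast (algebraMap ℤ (𝓞 L)) m, Algebra.norm_algebraMap, RingOfIntegers.rank]
      at hdvd
  rw [← Int.natAbs_dvd,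
    natAbs_discr_eq_absNorm_differentIdeal_mul_natAbs_discr_pow K (𝓞 K) L (𝓞 L)]
  push_cast
  exact mul_dvd_mul hnorm (pow_dvd_pow_of_dvd (abs_dvd_self _) _)

lemma not_dvd_discr_of_adjoin_eq_top_of_pow_eq_one {K L : Type*} [Field K] [NumberField K]
    [Field L] [NumberField L] [Algebra K L] {p : ℕ} (hp : p.Prime) (hK : ¬ (p : ℤ) ∣ discr K)
    {w : L} (hw : Algebra.adjoin K {w} = ⊤) {m : ℕ} (hmp : m.Coprime p) (hm : w ^ m = 1) :
    ¬ (p : ℤ) ∣ discr L := by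
  have hpm : ¬ p ∣ m := hp.coprime_iff_not_dvd.mp hmp.symm
  have hp' := Nat.prime_iff_prime_int.mp hp
  intro hL
  rcases hp'.dvd_or_dvd (hL.trans (discr_dvd_of_adjoin_eq_top_of_pow_eq_one hw hm)) with h | h
  · exact hpm (Int.natCast_dvd_natCast.mp (hp'.dvd_of_dvd_pow h))
  · exact hK (hp'.dvd_of_dvd_pow h)

lemma exists_numberField_adjoin_simple_not_dvd_discr {K E : Type*} [Field K] [NumberField K]
    [Field E] [Algebra K E] {p : ℕ} (hp : p.Prime) (hK : ¬ (p : ℤ) ∣ discr K) {w : E} {m : ℕ}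
    (hmp : m.Coprime p) (hm : w ^ m = 1) :
    ∃ _ : NumberField K⟮w⟯, ¬ (p : ℤ) ∣ discr K⟮w⟯ := by
  have hm0 : m ≠ 0 := by rintro rfl; exact hp.ne_one ((Nat.coprime_zero_left p).mp hmp)
  have hint : IsIntegral K w := .of_pow hm0.bot_lt (hm ▸ isIntegral_one)
  have : FiniteDimensional K K⟮w⟯ := adjoin.finiteDimensional hint
  have : NumberField K⟮w⟯ := .of_module_finite K _
  have hgen : Algebra.adjoin K {AdjoinSimple.gen K w} = ⊤ := by
    simpa using (adjoin.powerBasis hint).adjoin_gen_eq_top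
  exact ⟨this, not_dvd_discr_of_adjoin_eq_top_of_pow_eq_one hp hK hgen hmp (Subtype.ext hm)⟩

lemma exists_numberField_adjoin_not_dvd_discr {K E : Type*} [Field K] [NumberField K] [Field E]
    [Algebra K E] {p : ℕ} (hp : p.Prime) (hK : ¬ (p : ℤ) ∣ discr K) (T : Finset E)
    (hT : ∀ x ∈ T, ∃ m : ℕ, m.Coprime p ∧ x ^ m = 1) :
    ∃ _ : NumberField (adjoin K (T : Set E)), ¬ (p : ℤ) ∣ discr (adjoin K (T : Set E)) := by
  refine induction_on_adjoin_finset T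
    (fun F ↦ ∃ _ : NumberField F, ¬ (p : ℤ) ∣ discr F) ?_ fun F x hx ⟨_, hF⟩ ↦ ?_
  · have : NumberField (⊥ : IntermediateField K E) := .of_module_finite K _
    exact ⟨this, by rwa [discr_eq_discr_of_ringEquiv _ (botEquiv K E).toRingEquiv]⟩
  · obtain ⟨m, hmp, hm⟩ := hT x hx
    exact exists_numberField_adjoin_simple_not_dvd_discr hp hF hmp hm

lemma dvd_discr_of_isPrimitiveRoot_prime_pow {L : Type*} [Field L] [NumberField L] {p : ℕ}
    (hp : p.Prime) {k : ℕ} (hpk : 2 < p ^ k) {ζ : L} (hζ : IsPrimitiveRoot ζ (p ^ k)) :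
    (p : ℤ) ∣ discr L := by
  have : Fact p.Prime := ⟨hp⟩
  have : NeZero (p ^ k) := ⟨by lia⟩
  have : IsCyclotomicExtension {p ^ k} ℚ ℚ⟮ζ⟯ := hζ.intermediateField_adjoin_isCyclotomicExtension ℚ
  have hk : k ≠ 0 := by rintro rfl; simp at hpk
  have hexp : 1 < (p - 1) * k := by
    rcases hp.two_le.eq_or_lt with rfl | hp2
    · have : k ≠ 1 := by rintro rfl; simp at hpk
      lia
    · exact lt_of_lt_of_le (by lia) (Nat.le_mul_of_pos_right (p - 1) hk.bot_lt)
  have hdiscr : (p : ℤ) ∣ discr ℚ⟮ζ⟯ := by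
    rw [IsCyclotomicExtension.Rat.discr_prime_pow p k ℚ⟮ζ⟯]
    exact (dvd_pow_self _ (mul_ne_zero (pow_ne_zero _ hp.ne_zero) (by lia))).mul_left _
  exact hdiscr.trans (discr_dvd_discr ℚ⟮ζ⟯ L)

lemma eq_one_or_eq_neg_one_of_not_dvd_discr {L : Type*} [Field L] [NumberField L] {p : ℕ}
    (hp : p.Prime) (hL : ¬ (p : ℤ) ∣ discr L) {k : ℕ} {ζ : L} (hζ : IsPrimitiveRoot ζ (p ^ k)) :
    ζ = 1 ∨ ζ = -1 := by
  have hle : p ^ k ≤ 2 := by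
    by_contra! hpk
    exact hL (dvd_discr_of_isPrimitiveRoot_prime_pow hp hpk hζ)
  have hpos : 0 < p ^ k := pow_pos hp.pos k
  obtain hone | htwo : p ^ k = 1 ∨ p ^ k = 2 := by lia
  · exact .inl (IsPrimitiveRoot.one_right_iff.mp (hone ▸ hζ))
  · exact .inr (htwo ▸ hζ).eq_neg_one_of_two_right

end Discriminant

lemma units_val_pow_natCard_eq_one {M : Type*} [Monoid M] {W : Subgroup Mˣ} {u : Mˣ}
    (hu : u ∈ W) : (u : M) ^ Nat.card W = 1 := by
  rw [← Units.val_pow_eq_pow_val, orderOf_dvd_iff_pow_eq_one.mp (W.orderOf_dvd_natCard hu),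
    Units.val_one]

theorem stmt17_general {K E : Type*} [Field K] [NumberField K] [Field E] [Algebra K E] {ℓ : ℕ}
    (hℓ : ℓ.Prime) (hunram : ¬ (ℓ : ℤ) ∣ NumberField.discr K) {S : Set E}
    (hS : ∀ x ∈ S, ∃ m : ℕ, m.Coprime ℓ ∧ x ^ m = 1) {ζ : E} {k : ℕ}
    (hζ : IsPrimitiveRoot ζ (ℓ ^ k)) (hmem : ζ ∈ adjoin K S) :
    ζ = 1 ∨ ζ = -1 := by
  obtain ⟨T, hTS, hζT⟩ := exists_finset_of_mem_adjoin hmem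
  obtain ⟨_, hdiscr⟩ :=
    exists_numberField_adjoin_not_dvd_discr hℓ hunram T fun x hx ↦ hS x (hTS hx)
  have hζ' : IsPrimitiveRoot (⟨ζ, hζT⟩ : adjoin K (T : Set E)) (ℓ ^ k) :=
    IsPrimitiveRoot.coe_submonoidClass_iff.mp hζ
  simpa [Subtype.ext_iff] using eq_one_or_eq_neg_one_of_not_dvd_discr hℓ hdiscr hζ'

/-- Remark 4.7 (number field case): let `K` be a number field, `ℓ` a prime not dividing the
discriminant of `K` (i.e. unramified in `K`), and `W` a finite group of roots of unity of
order coprime to `ℓ`. Any root of unity of `ℓ`-power order lying in `K(W)` lies in `K`. -/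
theorem stmt17 (K : Type*) [Field K] [NumberField K] (ℓ : ℕ) (hℓ : ℓ.Prime)
    (hunram : ¬ ((ℓ : ℤ) ∣ NumberField.discr K))
    (W : Subgroup (AlgebraicClosure K)ˣ) (hWfin : (W : Set (AlgebraicClosure K)ˣ).Finite)
    (hWroot : ∀ x ∈ W, ∃ n : ℕ, 0 < n ∧ (x : AlgebraicClosure K) ^ n = 1)
    (hWcop : Nat.Coprime (Nat.card W) ℓ) :
    ∀ (ζ : AlgebraicClosure K) (k : ℕ), IsPrimitiveRoot ζ (ℓ ^ k) →
      ζ ∈ IntermediateField.adjoin K (Units.val '' (W : Set (AlgebraicClosure K)ˣ)) →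
      ∃ y : K, algebraMap K (AlgebraicClosure K) y = ζ := by
  intro ζ k hζ hmem
  obtain rfl | rfl := stmt17_general hℓ hunram (Set.forall_mem_image.mpr fun u hu ↦
    ⟨Nat.card W, hWcop, units_val_pow_natCard_eq_one hu⟩) hζ hmem
  exacts [⟨1, map_one _⟩, ⟨-1, by simp⟩]

end
end

section
/- Let ℓ be a prime with ℓ odd or ζ_4 ∈ K, and ℓ ≠ char(K). Let t ≥ 1 be the largest integer such that ζ_{ℓ^t} ∈ K(ζ_{2𝒫}) (or t = ∞), and let w ≥ 0 be the largest integer such that ζ_{ℓ^w} ∈ K (setting w = 0 if ζ_ℓ ∉ K), assumed finite. Then K(ζ_{2𝒫}) ∩ √[ℓ^∞]{K^×} ⊆ ⟨ζ_{ℓ^{t+w}}, √[ℓ^w]{K^×}⟩, and K(ζ_{2𝒫}) ∩ K(√[ℓ^∞]{K^×}) = K(K(ζ_{2𝒫}) ∩ √[ℓ^∞]{K^×}), i.e., the intersection field is generated over K by the radicals of ℓ-power order that lie in K(ζ_{2𝒫}). -/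
noncomputable section

open IntermediateField

/-!
Write `F` for `K(ζ_{2𝒫})`; the argument works for every abelian extension `F` of `K` containing a
primitive `ℓ`-th root of unity.

For the inclusion, let `x ∈ F` with `x ^ ℓ ^ n ∈ K`, and let `σ` act on the `ℓ ^ n`-th roots of
unity as `ζ ↦ ζ ^ k`. Every automorphism `τ` multiplies `x` by such a root of unity and commutes
with `σ` on `F`, so `σ x / x ^ k` is Galois invariant, and `x ^ (k - 1)` is a root of unity in `F`
times an element of `K`. Since `ζ_{ℓ ^ (w + 1)} ∉ K`, one can choose `σ` such that `ℓ ^ (w + 1)`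
does not divide `k - 1`; as `x` has `ℓ`-power order modulo `K^×`, already `x ^ ℓ ^ w` is such a
product, and it remains to extract an `ℓ ^ w`-th root.

For the intersection of fields, an element of `K(√[ℓ^∞]{K^×})` is a sum of radicals. If `σ` fixes
`F` and moves a radical `x`, then some power of `σ` multiplies `x` by a nontrivial `ℓ`-th root of
unity, because `1 + k + ⋯ + k ^ (ℓ ^ j - 1)` has `ℓ`-adic valuation exactly `j`. That root lies in
`F`, so the orbit sum `∑ σ ^ i x` over `i < ℓ ^ n` vanishes, whereas for a radical fixed by `σ` it
is `ℓ ^ n` times the radical. Averaging over `σ` thus deletes from a sum of radicals that lies in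
`F` the terms moved by `σ`, and repeating this removes all terms outside `F`.
-/

section GeomSum

open Finset

lemma sq_dvd_geomSum_sub {ℓ : ℕ} (hℓ : ℓ.Prime) {k : ℤ} (hk : (ℓ : ℤ) ∣ k - 1)
    (h4 : Odd ℓ ∨ 4 ∣ k - 1) : (ℓ : ℤ) ^ 2 ∣ ∑ i ∈ range ℓ, k ^ i - ℓ := by
  rcases hℓ.eq_two_or_odd' with rfl | hodd
  · have h4 : 4 ∣ k - 1 := h4.resolve_left (by decide)
    simp only [sum_range_succ, range_zero, sum_empty, Nat.cast_ofNat, pow_zero, pow_one]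
    omega
  · obtain ⟨b, hb⟩ := hk
    obtain rfl : k = 1 + ℓ * b := by rw [← hb]; ring
    simpa using odd_sq_dvd_geom_sum₂_sub (1 : ℤ) b hodd

lemma exists_geomSum_eq_prime_mul {ℓ : ℕ} (hℓ : ℓ.Prime) {k : ℤ} (hk : (ℓ : ℤ) ∣ k - 1)
    (h4 : Odd ℓ ∨ 4 ∣ k - 1) : ∃ v : ℤ, ¬(ℓ : ℤ) ∣ v ∧ ∑ i ∈ range ℓ, k ^ i = ℓ * v := by
  obtain ⟨c, hc⟩ := sq_dvd_geomSum_sub hℓ hk h4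
  refine ⟨1 + ℓ * c, fun hdvd ↦ ?_, by linear_combination hc⟩
  exact (Nat.prime_iff_prime_int.1 hℓ).not_dvd_one ((dvd_add_left (dvd_mul_right _ c)).1 hdvd)

lemma geomSum_mul_eq_mul_geomSum {R : Type*} [CommSemiring R] (k : R) (m n : ℕ) :
    ∑ i ∈ range (m * n), k ^ i = (∑ i ∈ range m, k ^ i) * ∑ j ∈ range n, (k ^ m) ^ j := by
  induction n with
  | zero => simp
  | succ n ih =>
    rw [mul_add_one, sum_range_add, ih, sum_range_succ _ n, mul_add,
      sum_mul _ _ ((k ^ m) ^ n)]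
    simp only [pow_add, pow_mul, mul_comm]

lemma exists_geomSum_eq_prime_pow_mul {ℓ : ℕ} (hℓ : ℓ.Prime) {k : ℤ} (hk : (ℓ : ℤ) ∣ k - 1)
    (h4 : Odd ℓ ∨ 4 ∣ k - 1) (j : ℕ) :
    ∃ v : ℤ, ¬(ℓ : ℤ) ∣ v ∧ ∑ i ∈ range (ℓ ^ j), k ^ i = ℓ ^ j * v := by
  induction j with
  | zero => exact ⟨1, (Nat.prime_iff_prime_int.1 hℓ).not_dvd_one, by simp⟩
  | succ j ih =>
    have hdvd : k - 1 ∣ k ^ ℓ ^ j - 1 := by simpa using sub_dvd_pow_sub_pow k 1 (ℓ ^ j)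
    obtain ⟨v, hv, hsum⟩ := ih
    obtain ⟨u, hu, hsum'⟩ :=
      exists_geomSum_eq_prime_mul hℓ (hk.trans hdvd) (h4.imp_right (·.trans hdvd))
    refine ⟨v * u, (Nat.prime_iff_prime_int.1 hℓ).not_dvd_mul hv hu, ?_⟩
    rw [pow_succ, geomSum_mul_eq_mul_geomSum, hsum, hsum']
    ring

end GeomSum

section CommGroup

variable {A : Type*} [CommGroup A]

lemma exists_isPrimitiveRoot_of_pow_eq_one {ℓ : ℕ} (hℓ : ℓ.Prime) {n : ℕ} {a : A}
    (ha : a ^ ℓ ^ n = 1) : ∃ s ≤ n, IsPrimitiveRoot a (ℓ ^ s) := by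
  obtain ⟨s, hs, hord⟩ := (Nat.dvd_prime_pow hℓ).1 (orderOf_dvd_of_pow_eq_one ha)
  exact ⟨s, hs, hord ▸ IsPrimitiveRoot.orderOf a⟩

lemma zpow_eq_self_iff_dvd_sub_one {a : A} {m : ℕ} (ha : IsPrimitiveRoot a m) (k : ℤ) :
    a ^ k = a ↔ (m : ℤ) ∣ k - 1 := by
  rw [← ha.zpow_eq_one_iff_dvd, zpow_sub_one, mul_inv_eq_one]

lemma pow_prime_pow_mem_of_zpow_mem {ℓ : ℕ} (hℓ : ℓ.Prime) {H : Subgroup A} {x : A} {n w : ℕ}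
    {m : ℤ} (hn : x ^ ℓ ^ n ∈ H) (hm : x ^ m ∈ H) (hdvd : ¬(ℓ : ℤ) ^ (w + 1) ∣ m) :
    x ^ ℓ ^ w ∈ H := by
  rw [← QuotientGroup.eq_one_iff] at hn hm ⊢
  rw [QuotientGroup.mk_pow] at hn ⊢
  rw [QuotientGroup.mk_zpow] at hm
  obtain ⟨j, -, hj⟩ := exists_isPrimitiveRoot_of_pow_eq_one hℓ hn
  have hjm : (ℓ : ℤ) ^ j ∣ m := mod_cast (hj.zpow_eq_one_iff_dvd m).1 hm
  have hjw : j ≤ w := by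
    by_contra! hwj
    exact hdvd ((pow_dvd_pow _ hwj).trans hjm)
  exact (hj.pow_eq_one_iff_dvd _).2 (pow_dvd_pow ℓ hjw)

variable {G : Type*} [Monoid G] [MulDistribMulAction G A]

lemma pow_smul_eq_mul_zpow_geomSum {g : G} {x e : A} {k : ℤ} (hx : g • x = x * e)
    (he : g • e = e ^ k) (m : ℕ) : g ^ m • x = x * e ^ ∑ i ∈ Finset.range m, k ^ i := by
  induction m with
  | zero => simp
  | succ m ih =>
    rw [pow_succ', mul_smul, ih, smul_mul', smul_zpow', hx, he, ← zpow_mul, Finset.mul_sum,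
      Finset.sum_range_succ', pow_zero, zpow_add_one, mul_assoc, mul_comm e]
    simp only [pow_succ']

lemma smul_smul_div_zpow_eq_of_comm {g h : G} {x : A} {k : ℤ} (hcomm : g • h • x = h • g • x)
    (hk : g • (h • x / x) = (h • x / x) ^ k) : h • (g • x / x ^ k) = g • x / x ^ k := by
  rw [smul_div', hcomm, div_zpow, div_eq_div_iff_mul_eq_mul] at hk
  rw [smul_div', smul_zpow', div_eq_div_iff_mul_eq_mul, hk, mul_comm]

end CommGroup

section Galois

variable {F L : Type*} [Field F] [Field L] [Algebra F L]

lemma exists_algEquiv_apply_ne [Normal F L] {y : L} (hsep : IsSeparable F y)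
    (hy : y ∉ Set.range (algebraMap F L)) : ∃ σ : Gal(L/F), σ y ≠ y := by
  obtain ⟨z, hz, hconj⟩ :=
    (notMem_iff_exists_ne_and_isConjRoot hsep (Normal.splits inferInstance y)).1
      (mt Algebra.mem_bot.1 hy)
  obtain ⟨σ, rfl⟩ := isConjRoot_iff_exists_algEquiv.1 hconj.symm
  exact ⟨σ, hz.symm⟩

lemma isSeparable_of_pow_mem_range {x : L} (hx : x ≠ 0) {m : ℕ} (hm : (m : F) ≠ 0)
    (hxm : x ^ m ∈ Set.range (algebraMap F L)) : IsSeparable F x := by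
  obtain ⟨a, ha⟩ := hxm
  have ha0 : a ≠ 0 := by
    rintro rfl
    exact pow_ne_zero m hx (by rw [← ha, map_zero])
  refine (Polynomial.separable_X_pow_sub_C a hm ha0).of_dvd (minpoly.dvd _ _ ?_)
  simp [ha]

lemma smul_div_pow_eq_one (σ : Gal(L/F)) {x : Lˣ} {m : ℕ}
    (hx : (x : L) ^ m ∈ Set.range (algebraMap F L)) : (σ • x / x) ^ m = 1 := by
  obtain ⟨a, ha⟩ := hx
  have hfix : σ • x ^ m = x ^ m := by
    ext
    simp [← map_pow, ← ha]
  rw [div_pow, ← smul_pow', hfix, div_self']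

lemma exists_forall_smul_eq_zpow (σ : Gal(L/F)) (n : ℕ) [NeZero n] :
    ∃ k : ℤ, ∀ ζ : Lˣ, ζ ^ n = 1 → σ • ζ = ζ ^ k := by
  obtain ⟨k, hk⟩ := rootsOfUnity.integer_power_of_ringEquiv' n (σ : L ≃+* L)
  exact ⟨k, fun ζ hζ ↦ Units.ext (hk ζ ((mem_rootsOfUnity n ζ).2 hζ))⟩

lemma dvd_sub_one_of_forall_smul_eq_zpow {σ : Gal(L/F)} {n : ℕ} {k : ℤ}
    (hk : ∀ ζ : Lˣ, ζ ^ n = 1 → σ • ζ = ζ ^ k) {m : ℕ} (hmn : m ∣ n)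
    (hm : ∃ z : F, IsPrimitiveRoot z m) (hm0 : m ≠ 0) : (m : ℤ) ∣ k - 1 := by
  obtain ⟨z, hz⟩ := hm
  have hzL : IsPrimitiveRoot (algebraMap F L z) m :=
    hz.map_of_injective (algebraMap F L).injective
  let ζ : Lˣ := Units.mk0 _ (hzL.ne_zero hm0)
  have hζ : IsPrimitiveRoot ζ m := IsPrimitiveRoot.coe_units_iff.1 hzL
  have hfix : σ • ζ = ζ := Units.ext (σ.commutes z)
  rw [← zpow_eq_self_iff_dvd_sub_one hζ, ← hk ζ ((hζ.pow_eq_one_iff_dvd n).2 hmn), hfix]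

lemma mem_range_algebraMap_of_pow_eq_one {m : ℕ} [NeZero m] (hm : ∃ z : F, IsPrimitiveRoot z m)
    {ζ : L} (hζ : ζ ^ m = 1) : ζ ∈ Set.range (algebraMap F L) := by
  obtain ⟨z, hz⟩ := hm
  obtain ⟨i, -, rfl⟩ :=
    (hz.map_of_injective (algebraMap F L).injective).eq_pow_of_pow_eq_one hζ
  exact ⟨z ^ i, map_pow _ z i⟩

lemma pow_apply_eq_of_apply_eq {σ : Gal(L/F)} {y : L} (hy : σ y = y) (m : ℕ) :
    (σ ^ m) y = y := by
  rw [AlgEquiv.coe_pow]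
  exact Function.IsFixedPt.iterate hy m

lemma sum_pow_apply_eq_zero {σ : Gal(L/F)} {x : L} {N m : ℕ} {ζ : F} (hN : (σ ^ N) x = x)
    (hm : (σ ^ m) x = algebraMap F L ζ * x) (hζ : ζ ≠ 1) :
    ∑ i ∈ Finset.range N, (σ ^ i) x = 0 := by
  set y := ∑ i ∈ Finset.range N, (σ ^ i) x with hy
  have hσy : σ y = y := by
    have hshift : σ y = ∑ i ∈ Finset.range N, (σ ^ (i + 1)) x := by
      simp only [hy, map_sum, pow_succ', AlgEquiv.mul_apply]
    have hcycle := (Finset.sum_range_succ' (fun i ↦ (σ ^ i) x) N).symm.trans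
      (Finset.sum_range_succ (fun i ↦ (σ ^ i) x) N)
    rw [hN, pow_zero, AlgEquiv.one_apply] at hcycle
    exact hshift.trans (add_right_cancel hcycle)
  have hfixed : (σ ^ m) y = y := pow_apply_eq_of_apply_eq hσy m
  have hscaled : (σ ^ m) y = algebraMap F L ζ * y := by
    rw [hy, map_sum, Finset.mul_sum]
    refine Finset.sum_congr rfl fun i _ ↦ ?_
    rw [← AlgEquiv.mul_apply, pow_mul_comm, AlgEquiv.mul_apply, hm, map_mul, AlgEquiv.commutes]
  have hprod : (algebraMap F L ζ - 1) * y = 0 := by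
    rw [sub_mul, ← hscaled, hfixed, one_mul, sub_self]
  exact (mul_eq_zero.1 hprod).resolve_left (sub_ne_zero.2 (by simpa using hζ))

end Galois

section RadicalSums

variable {F L : Type*} [Field F] [Field L] [Algebra F L] {ℓ : ℕ}

lemma exists_pow_prime_pow_smul_eq (hℓ : ℓ.Prime) (hζ : ∃ z : F, IsPrimitiveRoot z ℓ)
    (h4 : Odd ℓ ∨ ∃ z : F, IsPrimitiveRoot z 4) (σ : Gal(L/F)) {x : Lˣ} {n : ℕ}
    (hx : (x : L) ^ ℓ ^ n ∈ Set.range (algebraMap F L)) (j : ℕ) :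
    ∃ v : ℤ, ¬(ℓ : ℤ) ∣ v ∧ σ ^ ℓ ^ j • x = x * (σ • x / x) ^ (ℓ ^ j * v) := by
  have : NeZero (ℓ ^ (n + 2)) := ⟨pow_ne_zero _ hℓ.ne_zero⟩
  obtain ⟨k, hk⟩ := exists_forall_smul_eq_zpow σ (ℓ ^ (n + 2))
  have hkℓ : (ℓ : ℤ) ∣ k - 1 :=
    dvd_sub_one_of_forall_smul_eq_zpow hk (dvd_pow_self ℓ (by omega)) hζ hℓ.ne_zero
  have hk4 : Odd ℓ ∨ 4 ∣ k - 1 := by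
    refine hℓ.eq_two_or_odd'.symm.imp_right fun h2 ↦ ?_
    subst h2
    exact dvd_sub_one_of_forall_smul_eq_zpow hk (pow_dvd_pow 2 (by omega : 2 ≤ n + 2))
      (h4.resolve_left (by decide)) (by decide)
  obtain ⟨v, hv, hsum⟩ := exists_geomSum_eq_prime_pow_mul hℓ hkℓ hk4 j
  have he : (σ • x / x) ^ ℓ ^ (n + 2) = 1 := by
    rw [pow_add, pow_mul, smul_div_pow_eq_one σ hx, one_pow]
  exact ⟨v, hv, hsum ▸ pow_smul_eq_mul_zpow_geomSum (mul_div_cancel x (σ • x)).symm (hk _ he) _⟩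

lemma pow_prime_pow_smul_eq_self (hℓ : ℓ.Prime) (hζ : ∃ z : F, IsPrimitiveRoot z ℓ)
    (h4 : Odd ℓ ∨ ∃ z : F, IsPrimitiveRoot z 4) (σ : Gal(L/F)) {x : Lˣ} {n : ℕ}
    (hx : (x : L) ^ ℓ ^ n ∈ Set.range (algebraMap F L)) : σ ^ ℓ ^ n • x = x := by
  obtain ⟨v, -, hv⟩ := exists_pow_prime_pow_smul_eq hℓ hζ h4 σ hx n
  rw [hv, zpow_mul, ← Nat.cast_pow, zpow_natCast, smul_div_pow_eq_one σ hx, one_zpow, mul_one]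

lemma exists_pow_smul_eq_mul_of_smul_ne (hℓ : ℓ.Prime) (hζ : ∃ z : F, IsPrimitiveRoot z ℓ)
    (h4 : Odd ℓ ∨ ∃ z : F, IsPrimitiveRoot z 4) {σ : Gal(L/F)} {x : Lˣ} {n : ℕ}
    (hx : (x : L) ^ ℓ ^ n ∈ Set.range (algebraMap F L)) (hσ : σ • x ≠ x) :
    ∃ (m : ℕ) (ζ : Lˣ), ζ ^ ℓ = 1 ∧ ζ ≠ 1 ∧ σ ^ m • x = ζ * x := by
  obtain ⟨s, -, hs⟩ := exists_isPrimitiveRoot_of_pow_eq_one hℓ (smul_div_pow_eq_one σ hx)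
  obtain ⟨b, rfl⟩ : ∃ b, s = b + 1 := by
    refine Nat.exists_eq_succ_of_ne_zero ?_
    rintro rfl
    exact hσ (div_eq_one.1 (by simpa using hs.pow_eq_one))
  obtain ⟨v, hv, hpow⟩ := exists_pow_prime_pow_smul_eq hℓ hζ h4 σ hx b
  have hdvd (u : ℤ) : (σ • x / x) ^ (ℓ ^ b * u) = 1 ↔ (ℓ : ℤ) ∣ u := by
    rw [hs.zpow_eq_one_iff_dvd, Nat.cast_pow, pow_succ,
      mul_dvd_mul_iff_left (pow_ne_zero b (Nat.cast_ne_zero.2 hℓ.ne_zero))]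
  refine ⟨ℓ ^ b, (σ • x / x) ^ (ℓ ^ b * v), ?_, mt (hdvd v).1 hv, by rw [hpow, mul_comm]⟩
  rw [← zpow_natCast, ← zpow_mul, mul_assoc]
  exact (hdvd _).2 (dvd_mul_left _ v)

lemma sum_pow_apply_eq_zero_of_smul_ne (hℓ : ℓ.Prime) (hζ : ∃ z : F, IsPrimitiveRoot z ℓ)
    (h4 : Odd ℓ ∨ ∃ z : F, IsPrimitiveRoot z 4) {σ : Gal(L/F)} {x : Lˣ} {n : ℕ}
    (hx : (x : L) ^ ℓ ^ n ∈ Set.range (algebraMap F L)) (hσ : σ • x ≠ x) :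
    ∑ i ∈ Finset.range (ℓ ^ n), (σ ^ i) (x : L) = 0 := by
  have : NeZero ℓ := ⟨hℓ.ne_zero⟩
  obtain ⟨m, ζ, hζℓ, hζ1, hm⟩ := exists_pow_smul_eq_mul_of_smul_ne hℓ hζ h4 hx hσ
  obtain ⟨z, hz⟩ := mem_range_algebraMap_of_pow_eq_one hζ (ζ := (ζ : L))
    (by rw [← Units.val_pow_eq_pow_val, hζℓ, Units.val_one])
  refine sum_pow_apply_eq_zero (m := m) (ζ := z)
    (congrArg Units.val (pow_prime_pow_smul_eq_self hℓ hζ h4 σ hx)) ?_ ?_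
  · rw [hz]
    exact congrArg Units.val hm
  · rintro rfl
    exact hζ1 (Units.ext (by simpa using hz.symm))

lemma sum_filter_smul_eq_of_sum_eq (hℓ : ℓ.Prime) (hℓF : (ℓ : F) ≠ 0)
    (hζ : ∃ z : F, IsPrimitiveRoot z ℓ) (h4 : Odd ℓ ∨ ∃ z : F, IsPrimitiveRoot z 4)
    [DecidableEq Lˣ] {n : ℕ} {s : Finset Lˣ}
    (hs : ∀ x ∈ s, (x : L) ^ ℓ ^ n ∈ Set.range (algebraMap F L)) {c : Lˣ → F} {α : F}
    (hα : ∑ x ∈ s, c x • (x : L) = algebraMap F L α) (σ : Gal(L/F)) :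
    ∑ x ∈ s with σ • x = x, c x • (x : L) = algebraMap F L α := by
  let T : L →ₗ[F] L := ∑ i ∈ Finset.range (ℓ ^ n), (σ ^ i).toLinearMap
  have hT (y : L) : T y = ∑ i ∈ Finset.range (ℓ ^ n), (σ ^ i) y := by simp [T]
  have hT_fixed (y : L) (hy : σ y = y) : T y = (ℓ ^ n : F) • y := by
    simp [hT, pow_apply_eq_of_apply_eq hy, Algebra.smul_def]
  have hTx (x : Lˣ) (hx : x ∈ s) : T x = if σ • x = x then (ℓ ^ n : F) • (x : L) else 0 := by
    split_ifs with hσ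
    · exact hT_fixed x (congrArg Units.val hσ)
    · rw [hT, sum_pow_apply_eq_zero_of_smul_ne hℓ hζ h4 (hs x hx) hσ]
  have haverage : (ℓ ^ n : F) • ∑ x ∈ s with σ • x = x, c x • (x : L) =
      (ℓ ^ n : F) • algebraMap F L α := calc
    _ = ∑ x ∈ s, c x • T x := by
      rw [Finset.sum_filter, Finset.smul_sum]
      refine Finset.sum_congr rfl fun x hx ↦ ?_
      rw [hTx x hx, smul_ite, smul_ite, smul_zero, smul_zero, smul_comm]
    _ = T (algebraMap F L α) := by rw [← hα]; simp only [map_sum, map_smul]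
    _ = _ := hT_fixed _ (σ.commutes α)
  exact smul_right_injective L (pow_ne_zero n hℓF) haverage

open scoped Classical in
theorem sum_filter_mem_range_eq_of_sum_eq [Normal F L] (hℓ : ℓ.Prime) (hℓF : (ℓ : F) ≠ 0)
    (hζ : ∃ z : F, IsPrimitiveRoot z ℓ) (h4 : Odd ℓ ∨ ∃ z : F, IsPrimitiveRoot z 4)
    {n : ℕ} {s : Finset Lˣ} (hs : ∀ x ∈ s, (x : L) ^ ℓ ^ n ∈ Set.range (algebraMap F L))
    {c : Lˣ → F} {α : F} (hα : ∑ x ∈ s, c x • (x : L) = algebraMap F L α) :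
    ∑ x ∈ s with ↑x ∈ Set.range (algebraMap F L), c x • (x : L) = algebraMap F L α := by
  induction s using Finset.strongInduction with
  | H s ih =>
    by_cases hall : ∀ x ∈ s, (x : L) ∈ Set.range (algebraMap F L)
    · rwa [Finset.filter_true_of_mem hall]
    push Not at hall
    obtain ⟨x₀, hx₀, hx₀F⟩ := hall
    have hsep : IsSeparable F (x₀ : L) :=
      isSeparable_of_pow_mem_range x₀.ne_zero (by simpa using pow_ne_zero n hℓF) (hs x₀ hx₀)
    obtain ⟨σ, hσ⟩ := exists_algEquiv_apply_ne hsep hx₀F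
    have hssub : {x ∈ s | σ • x = x} ⊂ s :=
      Finset.filter_ssubset.2 ⟨x₀, hx₀, fun h ↦ hσ (congrArg Units.val h)⟩
    have hfixed (x : Lˣ) (hx : (x : L) ∈ Set.range (algebraMap F L)) : σ • x = x := by
      obtain ⟨a, ha⟩ := hx
      exact Units.ext (by simp [← ha])
    have hsum := ih _ hssub (fun x hx ↦ hs x (Finset.mem_of_mem_filter x hx))
      (sum_filter_smul_eq_of_sum_eq hℓ hℓF hζ h4 hs hα σ)
    rwa [Finset.filter_filter, Finset.filter_congr
      fun x _ ↦ (and_iff_right_of_imp (hfixed x))] at hsum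

end RadicalSums

section IntermediateFields

variable {K L : Type*} [Field K] [Field L] [Algebra K L]

lemma isCyclotomicExtension_adjoin_isPrimitiveRoot {S : Set ℕ} (hS : 0 ∉ S)
    (hex : ∀ n ∈ S, ∃ r : L, IsPrimitiveRoot r n) :
    IsCyclotomicExtension S K (adjoin K {x : L | ∃ n ∈ S, IsPrimitiveRoot x n}) := by
  have heq : adjoin K {x : L | ∃ n ∈ S, IsPrimitiveRoot x n} =
      adjoin K {x : L | ∃ n ∈ S, n ≠ 0 ∧ x ^ n = 1} := by
    refine le_antisymm (adjoin.mono _ _ _ ?_) (adjoin_le_iff.2 ?_)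
    · rintro x ⟨n, hn, hx⟩
      exact ⟨n, hn, ne_of_mem_of_not_mem hn hS, hx.pow_eq_one⟩
    · rintro x ⟨n, hn, hn0, hx⟩
      have : NeZero n := ⟨hn0⟩
      obtain ⟨r, hr⟩ := hex n hn
      obtain ⟨i, -, rfl⟩ := hr.eq_pow_of_pow_eq_one hx
      have hr_mem : r ∈ {x : L | ∃ n ∈ S, IsPrimitiveRoot x n} := ⟨n, hn, hr⟩
      exact pow_mem (subset_adjoin K _ hr_mem) i
  rw [heq]
  exact isCyclotomicExtension_adjoin_of_exists_isPrimitiveRoot S K L fun n hn _ ↦ hex n hn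

lemma apply_comm_of_mem_isAbelianGalois (F : IntermediateField K L) [IsAbelianGalois K F]
    (σ τ : Gal(L/K)) {x : L} (hx : x ∈ F) : σ (τ x) = τ (σ x) := by
  lift x to F using hx
  simp only [← AlgEquiv.restrictNormal_apply F, ← AlgEquiv.mul_apply,
    mul_comm' (σ.restrictNormal F)]

lemma exists_sum_eq_of_mem_adjoin_units [Algebra.IsAlgebraic K L] {R : Subgroup Lˣ} {α : L}
    (hα : α ∈ adjoin K (Units.val '' (R : Set Lˣ))) :
    ∃ (s : Finset Lˣ) (c : Lˣ → K), (∀ x ∈ s, x ∈ R) ∧ ∑ x ∈ s, c x • (x : L) = α := by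
  have hclosure : (Submonoid.closure (Units.val '' (R : Set Lˣ)) : Set L) =
      Units.val '' (R : Set Lˣ) :=
    congrArg SetLike.coe (Submonoid.closure_eq (R.toSubmonoid.map (Units.coeHom L)))
  rw [← mem_toSubalgebra, adjoin_toSubalgebra_of_isAlgebraic
    fun x _ ↦ Algebra.IsAlgebraic.isAlgebraic x, ← Subalgebra.mem_toSubmodule,
    Algebra.adjoin_eq_span, hclosure, Finsupp.mem_span_image_iff_linearCombination] at hα
  obtain ⟨c, hc, rfl⟩ := hα
  exact ⟨c.support, c, fun x hx ↦ hc hx, (Finsupp.linearCombination_apply K c).symm⟩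

end IntermediateFields

section AlgebraicClosure

variable {K : Type*} [Field K]

lemma natCast_ne_zero_of_ringChar_ne {ℓ : ℕ} (hℓ : ℓ.Prime) (hchar : ringChar K ≠ ℓ) :
    (ℓ : K) ≠ 0 := fun h ↦
  ((Nat.dvd_prime hℓ).1 ((ringChar.spec K ℓ).1 h)).elim CharP.ringChar_ne_one hchar

lemma mem_baseUnits_iff {x : (AlgebraicClosure K)ˣ} :
    x ∈ baseUnits K ↔ (x : AlgebraicClosure K) ∈ Set.range (algebraMap K _) := by
  refine ⟨fun ⟨a, ha⟩ ↦ ⟨a, congrArg Units.val ha⟩, fun ⟨a, ha⟩ ↦ ?_⟩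
  have ha0 : a ≠ 0 := by
    rintro rfl
    exact x.ne_zero (by rw [← ha, map_zero])
  exact ⟨Units.mk0 a ha0, Units.ext ha⟩

lemma mem_radGroup_iff {m : ℕ} {x : (AlgebraicClosure K)ˣ} :
    x ∈ radGroup K m ↔ x ^ m ∈ baseUnits K := by
  rw [mem_baseUnits_iff]
  rfl

lemma mem_baseUnits_of_forall_smul_eq {m : ℕ} (hm : (m : K) ≠ 0) {x : (AlgebraicClosure K)ˣ}
    (hx : x ∈ radGroup K m) (hfix : ∀ σ : Gal(AlgebraicClosure K/K), σ • x = x) :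
    x ∈ baseUnits K := by
  by_contra hxK
  obtain ⟨σ, hσ⟩ := exists_algEquiv_apply_ne (isSeparable_of_pow_mem_range x.ne_zero hm hx)
    (mt mem_baseUnits_iff.2 hxK)
  exact hσ (congrArg Units.val (hfix σ))

lemma exists_forall_mem_radGroup_of_mem_radInf {ℓ : ℕ} {s : Finset (AlgebraicClosure K)ˣ}
    (hs : ∀ x ∈ s, x ∈ radInf K ℓ) : ∃ n, ∀ x ∈ s, x ∈ radGroup K (ℓ ^ n) := by
  choose! n hn using hs
  refine ⟨s.sup n, fun x hx ↦ ?_⟩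
  rw [← Nat.add_sub_of_le (Finset.le_sup (f := n) hx), pow_add]
  exact radGroup_le K (hn x hx)

lemma exists_smul_eq_zpow_not_dvd {ℓ w : ℕ} (hℓ : ℓ.Prime) (hℓK : (ℓ : K) ≠ 0)
    (hw : ¬∃ z : K, IsPrimitiveRoot z (ℓ ^ (w + 1))) (n : ℕ) :
    ∃ (σ : Gal(AlgebraicClosure K/K)) (k : ℤ), ¬(ℓ : ℤ) ^ (w + 1) ∣ k - 1 ∧
      ∀ ζ : (AlgebraicClosure K)ˣ, ζ ^ ℓ ^ n = 1 → σ • ζ = ζ ^ k := by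
  have hne (m : ℕ) : ((ℓ ^ m : ℕ) : K) ≠ 0 := by simpa using pow_ne_zero m hℓK
  have : NeZero (ℓ ^ (n + (w + 1))) := ⟨pow_ne_zero _ hℓ.ne_zero⟩
  obtain ⟨ξ, hξ⟩ := exists_isPrimitiveRoot_algebraicClosure (hne (w + 1))
  have hξ0 : ξ ≠ 0 := hξ.ne_zero (pow_ne_zero _ hℓ.ne_zero)
  have hξK : ξ ∉ Set.range (algebraMap K (AlgebraicClosure K)) := by
    rintro ⟨z, rfl⟩
    exact hw ⟨z, hξ.of_map_of_injective (algebraMap K (AlgebraicClosure K)).injective⟩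
  obtain ⟨σ, hσ⟩ := exists_algEquiv_apply_ne
    (isSeparable_of_pow_mem_range hξ0 (hne (w + 1)) ⟨1, by rw [hξ.pow_eq_one, map_one]⟩) hξK
  obtain ⟨k, hk⟩ := exists_forall_smul_eq_zpow σ (ℓ ^ (n + (w + 1)))
  refine ⟨σ, k, fun hdvd ↦ hσ ?_, fun ζ hζ ↦ hk ζ (by rw [pow_add, pow_mul, hζ, one_pow])⟩
  have hξu : IsPrimitiveRoot (Units.mk0 ξ hξ0) (ℓ ^ (w + 1)) := IsPrimitiveRoot.coe_units_iff.1 hξ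
  have hfix : σ • Units.mk0 ξ hξ0 = Units.mk0 ξ hξ0 := by
    rw [hk _ ((hξu.pow_eq_one_iff_dvd _).2 (pow_dvd_pow ℓ (by omega))),
      (zpow_eq_self_iff_dvd_sub_one hξu k).2 (mod_cast hdvd)]
  exact congrArg Units.val hfix

lemma smul_mem_unitsIn (F : IntermediateField K (AlgebraicClosure K)) [Normal K F]
    (σ : Gal(AlgebraicClosure K/K)) {x : (AlgebraicClosure K)ˣ} (hx : x ∈ unitsIn F) :
    σ • x ∈ unitsIn F := by
  have h := (σ.restrictNormal F ⟨x, hx⟩).2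
  rwa [AlgEquiv.restrictNormal_apply] at h

lemma pow_prime_pow_mem_rootsOfUnity_sup_baseUnits (F : IntermediateField K (AlgebraicClosure K))
    [IsAbelianGalois K F] {ℓ w n : ℕ} (hℓ : ℓ.Prime) (hℓK : (ℓ : K) ≠ 0)
    (hw : ¬∃ z : K, IsPrimitiveRoot z (ℓ ^ (w + 1))) {x : (AlgebraicClosure K)ˣ}
    (hxF : x ∈ unitsIn F) (hx : x ∈ radGroup K (ℓ ^ n)) :
    x ^ ℓ ^ w ∈ unitsIn F ⊓ rootsOfUnity (ℓ ^ n) (AlgebraicClosure K) ⊔ baseUnits K := by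
  obtain ⟨σ, k, hkw, hk⟩ := exists_smul_eq_zpow_not_dvd hℓ hℓK hw n
  have hroot (τ : Gal(AlgebraicClosure K/K)) : (τ • x / x) ^ ℓ ^ n = 1 := smul_div_pow_eq_one τ hx
  have hrad : σ • x / x ^ k ∈ radGroup K (ℓ ^ n) := by
    have hσx : σ • x = σ • x / x * x := (div_mul_cancel _ _).symm
    have hσx_mem : σ • x ∈ radGroup K (ℓ ^ n) := by
      rw [hσx]
      exact mul_mem (mem_radGroup_iff.2 ((hroot σ).symm ▸ one_mem _)) hx
    exact div_mem hσx_mem (zpow_mem hx k)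
  have hbase : σ • x / x ^ k ∈ baseUnits K := by
    refine mem_baseUnits_of_forall_smul_eq (by simpa using pow_ne_zero n hℓK) hrad fun τ ↦ ?_
    exact smul_smul_div_zpow_eq_of_comm
      (Units.ext (apply_comm_of_mem_isAbelianGalois F σ τ hxF)) (hk _ (hroot τ))
  have hroot_mem : σ • x / x ∈ unitsIn F ⊓ rootsOfUnity (ℓ ^ n) (AlgebraicClosure K) :=
    Subgroup.mem_inf.2
      ⟨div_mem (smul_mem_unitsIn F σ hxF) hxF, (mem_rootsOfUnity _ _).2 (hroot σ)⟩
  have hzpow : x ^ (k - 1) = σ • x / x * (σ • x / x ^ k)⁻¹ := by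
    rw [zpow_sub_one, inv_div, mul_comm, div_mul_div_cancel', div_eq_inv_mul]
  refine pow_prime_pow_mem_of_zpow_mem hℓ (Subgroup.mem_sup_right (mem_radGroup_iff.1 hx)) ?_ hkw
  rw [hzpow]
  exact Subgroup.mul_mem_sup hroot_mem (inv_mem hbase)

theorem unitsIn_inf_radInf_le (F : IntermediateField K (AlgebraicClosure K))
    [IsAbelianGalois K F] {ℓ w : ℕ} (hℓ : ℓ.Prime) (hℓK : (ℓ : K) ≠ 0) {t : ℕ∞}
    (ht : ∀ (n : ℕ) (x : AlgebraicClosure K), IsPrimitiveRoot x (ℓ ^ n) → x ∈ F → n ≤ t)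
    (hw : ¬∃ z : K, IsPrimitiveRoot z (ℓ ^ (w + 1))) :
    unitsIn F ⊓ radInf K ℓ ≤
      Subgroup.closure (pPowRootsUnits K ℓ (t + w)) ⊔ radGroup K (ℓ ^ w) := by
  rintro x ⟨hxF, n, hxn⟩
  obtain ⟨ζ, ⟨hζF, hζ⟩, b, hb, hζb⟩ := Subgroup.mem_sup.1
    (pow_prime_pow_mem_rootsOfUnity_sup_baseUnits F hℓ hℓK hw hxF hxn)
  obtain ⟨s, -, hs⟩ := exists_isPrimitiveRoot_of_pow_eq_one hℓ hζ
  have hst : (s : ℕ∞) ≤ t := ht s ζ (IsPrimitiveRoot.coe_units_iff.2 hs) hζF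
  obtain ⟨ξ, hξ⟩ : ∃ ξ : (AlgebraicClosure K)ˣ, ξ ^ ℓ ^ w = ζ := by
    obtain ⟨y, hy⟩ := IsAlgClosed.exists_pow_nat_eq (ζ : AlgebraicClosure K) (pow_pos hℓ.pos w)
    have hy0 : y ≠ 0 := by
      rintro rfl
      exact ζ.ne_zero (by rw [← hy, zero_pow (pow_ne_zero w hℓ.ne_zero)])
    exact ⟨Units.mk0 y hy0, Units.ext hy⟩
  obtain ⟨r, hr, hξr⟩ := exists_isPrimitiveRoot_of_pow_eq_one hℓ (n := s + w) (a := ξ)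
    (by rw [pow_add, mul_comm, pow_mul, hξ, hs.pow_eq_one])
  have hrt : (r : ℕ∞) ≤ t + w := calc
    (r : ℕ∞) ≤ s + w := mod_cast hr
    _ ≤ t + w := by gcongr
  rw [← mul_div_cancel ξ x]
  refine Subgroup.mul_mem_sup
    (Subgroup.subset_closure ⟨r, hrt, IsPrimitiveRoot.coe_units_iff.2 hξr⟩) ?_
  rwa [mem_radGroup_iff, div_pow, hξ, ← hζb, mul_div_cancel_left]

theorem inf_adjoin_radInf_eq (F : IntermediateField K (AlgebraicClosure K)) {ℓ : ℕ}
    (hℓ : ℓ.Prime) (hℓK : (ℓ : K) ≠ 0) (h4 : Odd ℓ ∨ ∃ z : K, IsPrimitiveRoot z 4)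
    (hζ : ∃ z : F, IsPrimitiveRoot z ℓ) :
    F ⊓ adjoin K (Units.val '' (radInf K ℓ : Set (AlgebraicClosure K)ˣ)) =
      adjoin K (Units.val '' (unitsIn F ⊓ radInf K ℓ : Set (AlgebraicClosure K)ˣ)) := by
  classical
  refine le_antisymm ?_ (le_inf ?_ (adjoin.mono _ _ _ (Set.image_mono fun x hx ↦ hx.2)))
  · rintro α ⟨hαF, hαR⟩
    obtain ⟨s, c, hs, hsum⟩ := exists_sum_eq_of_mem_adjoin_units hαR
    obtain ⟨n, hn⟩ := exists_forall_mem_radGroup_of_mem_radInf hs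
    have hℓF : (ℓ : F) ≠ 0 := by simpa using (map_ne_zero (algebraMap K F)).2 hℓK
    have h4F : Odd ℓ ∨ ∃ z : F, IsPrimitiveRoot z 4 :=
      h4.imp_right fun ⟨z, hz⟩ ↦ ⟨_, hz.map_of_injective (algebraMap K F).injective⟩
    have hradF (x) (hx : x ∈ s) :
        (x : AlgebraicClosure K) ^ ℓ ^ n ∈ Set.range (algebraMap F _) := by
      obtain ⟨a, ha⟩ := hn x hx
      exact ⟨algebraMap K F a, ha⟩
    have hsumF := sum_filter_mem_range_eq_of_sum_eq hℓ hℓF hζ h4F hradF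
      (c := fun x ↦ algebraMap K F (c x)) (α := ⟨α, hαF⟩) (by simpa using hsum)
    rw [show α = algebraMap F _ ⟨α, hαF⟩ from rfl, ← hsumF]
    refine sum_mem fun x hx ↦ ?_
    obtain ⟨hxs, y, hy⟩ := Finset.mem_filter.1 hx
    have hxF : (x : AlgebraicClosure K) ∈ F := hy ▸ y.2
    have hx_mem : x ∈ (unitsIn F ⊓ radInf K ℓ : Set (AlgebraicClosure K)ˣ) := ⟨hxF, hs x hxs⟩
    rw [algebraMap_smul]
    exact smul_mem _ (subset_adjoin K _ (Set.mem_image_of_mem _ hx_mem))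
  · rw [adjoin_le_iff]
    rintro _ ⟨x, hx, rfl⟩
    exact hx.1

lemma isAbelianGalois_cyclo2P_s18 (K : Type*) [Field K] : IsAbelianGalois K (cyclo2P K) := by
  let S : Set ℕ := {n | (n = 4 ∨ (n.Prime ∧ Odd n)) ∧ ¬ringChar K ∣ n}
  have hex (n : ℕ) (hn : n ∈ S) : ∃ r : AlgebraicClosure K, IsPrimitiveRoot r n :=
    exists_isPrimitiveRoot_algebraicClosure (mt (ringChar.spec K n).1 hn.2)
  have heq : cyclo2P K = adjoin K {x | ∃ n ∈ S, IsPrimitiveRoot x n} := by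
    simp only [cyclo2P, S, Set.mem_ofPred_eq, and_assoc]
  have hcyc : IsCyclotomicExtension S K (cyclo2P K) := by
    rw [heq]
    exact isCyclotomicExtension_adjoin_isPrimitiveRoot (by simp [S]) hex
  exact IsCyclotomicExtension.isAbelianGalois S K _

end AlgebraicClosure

theorem stmt18_general (K : Type*) [Field K] (F : IntermediateField K (AlgebraicClosure K))
    [IsAbelianGalois K F] (ℓ : ℕ) (hℓ : ℓ.Prime) (hℓK : (ℓ : K) ≠ 0)
    (h4 : Odd ℓ ∨ ∃ z : K, IsPrimitiveRoot z 4) (hζ : ∃ z : F, IsPrimitiveRoot z ℓ) (t : ℕ∞)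
    (ht : ∀ (n : ℕ) (x : AlgebraicClosure K), IsPrimitiveRoot x (ℓ ^ n) → x ∈ F → n ≤ t)
    (w : ℕ) (hw : ¬∃ z : K, IsPrimitiveRoot z (ℓ ^ (w + 1))) :
    unitsIn F ⊓ radInf K ℓ ≤
      Subgroup.closure (pPowRootsUnits K ℓ (t + (w : ℕ∞))) ⊔ radGroup K (ℓ ^ w) ∧
    F ⊓ adjoin K (Units.val '' (radInf K ℓ : Set (AlgebraicClosure K)ˣ)) =
      adjoin K (Units.val '' ((unitsIn F ⊓ radInf K ℓ) : Set (AlgebraicClosure K)ˣ)) :=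
  ⟨unitsIn_inf_radInf_le F hℓ hℓK ht hw, inf_adjoin_radInf_eq F hℓ hℓK h4 hζ⟩

/-- Equations (5.6) and (5.7) in the proof of Theorem 1.1: with `ℓ` odd or `ζ₄ ∈ K`,
`ℓ ≠ char K`, `t` the largest element of `ℕ ∪ {∞}` with `ζ_{ℓ^t} ∈ K(ζ_{2𝒫})`, and `w ≥ 0`
the largest integer with `ζ_{ℓ^w} ∈ K` (so `w = 0` if `ζ_ℓ ∉ K`), assumed finite:
`K(ζ_{2𝒫}) ∩ √[ℓ^∞]{K^×} ⊆ ⟨ζ_{ℓ^{t+w}}, √[ℓ^w]{K^×}⟩` and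
`K(ζ_{2𝒫}) ∩ K(√[ℓ^∞]{K^×}) = K(K(ζ_{2𝒫}) ∩ √[ℓ^∞]{K^×})`. -/
theorem stmt18 (K : Type*) [Field K] (ℓ : ℕ) (hℓ : ℓ.Prime) (hchar : ringChar K ≠ ℓ)
    (hodd : Odd ℓ ∨ ∃ z : K, IsPrimitiveRoot z 4)
    (t : ℕ∞) (ht1 : 1 ≤ t)
    (htin : ∀ n : ℕ, (n : ℕ∞) ≤ t → ∀ x : AlgebraicClosure K,
      IsPrimitiveRoot x (ℓ ^ n) → x ∈ cyclo2P K)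
    (htmax : ∀ n : ℕ, t < (n : ℕ∞) → ∀ x : AlgebraicClosure K,
      IsPrimitiveRoot x (ℓ ^ n) → x ∉ cyclo2P K)
    (w : ℕ) (hwin : ∃ z : K, IsPrimitiveRoot z (ℓ ^ w))
    (hwmax : ¬ ∃ z : K, IsPrimitiveRoot z (ℓ ^ (w + 1))) :
    unitsIn (cyclo2P K) ⊓ radInf K ℓ ≤
      Subgroup.closure (pPowRootsUnits K ℓ (t + (w : ℕ∞))) ⊔ radGroup K (ℓ ^ w) ∧
    cyclo2P K ⊓
        IntermediateField.adjoin K (Units.val '' (radInf K ℓ : Set (AlgebraicClosure K)ˣ)) =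
      IntermediateField.adjoin K
        (Units.val '' ((unitsIn (cyclo2P K) ⊓ radInf K ℓ) : Set (AlgebraicClosure K)ˣ)) := by
  have hℓK : (ℓ : K) ≠ 0 := natCast_ne_zero_of_ringChar_ne hℓ hchar
  have : IsAbelianGalois K (cyclo2P K) := isAbelianGalois_cyclo2P_s18 K
  have hζ : ∃ z : cyclo2P K, IsPrimitiveRoot z ℓ := by
    obtain ⟨r, hr⟩ := exists_isPrimitiveRoot_algebraicClosure hℓK
    have hr_mem : r ∈ cyclo2P K := htin 1 (mod_cast ht1) r (by rwa [pow_one])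
    exact ⟨⟨r, hr_mem⟩, IsPrimitiveRoot.coe_submonoidClass_iff.1 hr⟩
  exact stmt18_general K (cyclo2P K) ℓ hℓ hℓK hodd hζ t
    (fun n x hx hxF ↦ not_lt.1 fun h ↦ htmax n h x hx hxF) w hwmax

end
end
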